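/- arXiv:2212.08835 — 2 statements merged into one kernel-verified Lean document; each statement's English description precedes it below -/
import Mathlib

section
/- Let g belong to the range T(LlogL(-1,1)) of the finite Hilbert transform. Then a function f ∈ LlogL(-1,1) satisfies the airfoil equation T(f) = g almost everywhere if and only if there exists a constant c ∈ ℂ such that f(x) = −(1-x²)^{-1/2}·T(t ↦ √(1-t²) g(t))(x) + c·(1-x²)^{-1/2} for a.e. x ∈ (-1,1). In particular this inversion formula holds for every g ∈ L(log L)²(-1,1). -/
open MeasureTheory Set Filter

noncomputable section

/-- Lebesgue measure restricted to the interval `(-1, 1)`. -/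
def μI : Measure ℝ := volume.restrict (Set.Ioo (-1 : ℝ) 1)

/-- The finite Hilbert transform: the principal-value limit
`T(f)(t) = lim_{ε→0⁺} (1/π) ∫_{x∈(-1,1), |x-t|≥ε} f(x)/(x-t) dx`. -/
def FHT (f : ℝ → ℂ) (t : ℝ) : ℂ :=
  limUnder (nhdsWithin (0 : ℝ) (Set.Ioi 0)) fun ε : ℝ =>
    (Real.pi : ℂ)⁻¹ *
      ∫ x in {x : ℝ | x ∈ Set.Ioo (-1 : ℝ) 1 ∧ ε ≤ |x - t|}, f x / ((x : ℂ) - (t : ℂ))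

/-- The operator `T̂(g)(x) = -(1-x²)^{-1/2} T(t ↦ √(1-t²) g(t))(x)`. -/
def hatT (g : ℝ → ℂ) (x : ℝ) : ℂ :=
  -((Real.sqrt (1 - x ^ 2) : ℂ))⁻¹ * FHT (fun t => (Real.sqrt (1 - t ^ 2) : ℂ) * g t) x

/-- Membership in the Zygmund space `L log L(-1,1)`:
`f` is a.e. measurable on `(-1,1)` and `∫ |f| log⁺|f| < ∞`. -/
def MemLlogL (f : ℝ → ℂ) : Prop :=
  AEStronglyMeasurable f μI ∧
    IntegrableOn (fun x => ‖f x‖ * max (Real.log ‖f x‖) 0) (Set.Ioo (-1 : ℝ) 1)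

/-- The distribution function `λ ↦ |{x ∈ (-1,1) : |f(x)| > λ}|`. -/
def distFun (f : ℝ → ℂ) (lam : ℝ) : ℝ :=
  (volume {x : ℝ | x ∈ Set.Ioo (-1 : ℝ) 1 ∧ lam < ‖f x‖}).toReal

/-- The decreasing rearrangement `f*` of `f`, a function on `(0,2)`. -/
def decRearr (f : ℝ → ℂ) (t : ℝ) : ℝ :=
  sInf {lam : ℝ | 0 ≤ lam ∧ distFun f lam ≤ t}

/-- The `L log L` norm `‖f‖ = ∫_0^2 f*(t) log(2e/t) dt`. -/
def llogLNorm (f : ℝ → ℂ) : ℝ :=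
  ∫ t in Set.Ioo (0 : ℝ) 2, decRearr f t * Real.log (2 * Real.exp 1 / t)

/-- The `L(log L)^α` norm `∫_0^2 f*(t) log^α(2e/t) dt` (for `α = 0` this is the `L¹` norm). -/
def zygNorm (α : ℝ) (f : ℝ → ℂ) : ℝ :=
  ∫ t in Set.Ioo (0 : ℝ) 2, decRearr f t * Real.log (2 * Real.exp 1 / t) ^ α

/-- Membership in the Zygmund space `L(log L)^α(-1,1)`. -/
def MemZyg (α : ℝ) (f : ℝ → ℂ) : Prop :=
  AEStronglyMeasurable f μI ∧
    IntegrableOn (fun t => decRearr f t * Real.log (2 * Real.exp 1 / t) ^ α)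
      (Set.Ioo (0 : ℝ) 2)

/-- Membership in `L(log L)²(-1,1)`: `∫ |f| (log(2+|f|))² < ∞`. -/
def MemLlogL2 (f : ℝ → ℂ) : Prop :=
  AEStronglyMeasurable f μI ∧
    IntegrableOn (fun x => ‖f x‖ * Real.log (2 + ‖f x‖) ^ 2) (Set.Ioo (-1 : ℝ) 1)

/-- The constant `c(β,γ) = max{1/(1-β), 1/(1-γ), 1/(β+γ-1)}`. -/
def cBG (β γ : ℝ) : ℝ := max (max (1 / (1 - β)) (1 / (1 - γ))) (1 / (β + γ - 1))

open scoped Topology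

def Cau (u : ℝ → ℂ) (z : ℂ) : ℂ :=
  (Real.pi : ℂ)⁻¹ * ∫ x in Ioo (-1 : ℝ) 1, u x / ((x : ℂ) - z)

def Phi (u : ℝ → ℂ) (ζ : ℂ) : ℂ :=
  (Real.pi : ℂ)⁻¹ * ∫ x in Ioo (-1 : ℝ) 1, u x * ((1 - ζ ^ 2) / (1 - 2 * ζ * x + ζ ^ 2))

def PV (u : ℝ → ℂ) (t : ℝ) (ε : ℝ) : ℂ :=
    (Real.pi : ℂ)⁻¹ *
      ∫ x in {x : ℝ | x ∈ Set.Ioo (-1 : ℝ) 1 ∧ ε ≤ |x - t|}, u x / ((x : ℂ) - (t : ℂ))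

lemma FHT_eq {u : ℝ → ℂ} {t : ℝ} {l : ℂ} (h : Tendsto (PV u t) (𝓝[>] 0) (𝓝 l)) :
    FHT u t = l := h.limUnder_eq

lemma den_lb (ζ : ℂ) (hζ : ‖ζ‖ < 1) (x : ℝ) (hx : x ∈ Ioo (-1 : ℝ) 1) :
    (1 - ‖ζ‖) ^ 2 ≤ ‖1 - 2 * ζ * x + ζ ^ 2‖ := by
  obtain ⟨h1, h2⟩ := hx
  have hs : (0:ℝ) ≤ 1 - x ^ 2 := by nlinarith
  set y := Real.sqrt (1 - x ^ 2) with hy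
  have hy2 : y ^ 2 = 1 - x ^ 2 := Real.sq_sqrt hs
  set a : ℂ := ⟨x, y⟩ with ha
  have hna : ‖a‖ = 1 := by
    rw [← sq_eq_sq₀ (norm_nonneg _) zero_le_one, Complex.sq_norm, Complex.normSq_mk]
    nlinarith
  set b : ℂ := ⟨x, -y⟩ with hb
  have hnb : ‖b‖ = 1 := by
    rw [← sq_eq_sq₀ (norm_nonneg _) zero_le_one, Complex.sq_norm, Complex.normSq_mk]
    nlinarith
  have hfac : 1 - 2 * ζ * x + ζ ^ 2 = (a - ζ) * (b - ζ) := by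
    have h1 : a + b = 2 * x := by
      apply Complex.ext <;> simp [ha, hb]; ring
    have h2 : a * b = 1 := by
      apply Complex.ext <;> simp [ha, hb]
      · nlinarith
      · ring
    linear_combination ζ * h1 - h2
  rw [hfac, norm_mul]
  have e1 := norm_sub_norm_le a ζ
  have e2 := norm_sub_norm_le b ζ
  rw [hna] at e1; rw [hnb] at e2
  nlinarith [norm_nonneg (a - ζ)]

lemma den_ne (ζ : ℂ) (hζ : ‖ζ‖ < 1) (x : ℝ) (hx : x ∈ Ioo (-1 : ℝ) 1) :
    1 - 2 * ζ * x + ζ ^ 2 ≠ 0 := by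
  rw [← norm_pos_iff]
  exact lt_of_lt_of_le (by have : 0 < 1 - ‖ζ‖ := by linarith
                           positivity) (den_lb ζ hζ x hx)

lemma ker_meas (ζ : ℂ) : Measurable (fun x : ℝ => (1 - ζ ^ 2) / (1 - 2 * ζ * x + ζ ^ 2)) := by
  fun_prop

lemma ker_bd (ζ : ℂ) (hζ : ‖ζ‖ < 1) (x : ℝ) (hx : x ∈ Ioo (-1 : ℝ) 1) :
    ‖(1 - ζ ^ 2) / (1 - 2 * ζ * x + ζ ^ 2)‖ ≤ 2 / (1 - ‖ζ‖) ^ 2 := by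
  rw [norm_div]
  have h0 : 0 < 1 - ‖ζ‖ := by linarith
  have := den_lb ζ hζ x hx
  have h2 : ‖1 - ζ ^ 2‖ ≤ 2 := by
    refine (norm_sub_le _ _).trans ?_
    rw [norm_one, norm_pow]
    nlinarith [norm_nonneg ζ]
  gcongr

lemma Phi_int {u : ℝ → ℂ} (hu : IntegrableOn u (Ioo (-1) 1)) (ζ : ℂ) (hζ : ‖ζ‖ < 1) :
    IntegrableOn (fun x : ℝ => u x * ((1 - ζ ^ 2) / (1 - 2 * ζ * x + ζ ^ 2))) (Ioo (-1) 1) := by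
  refine Integrable.mul_bdd (c := 2 / (1 - ‖ζ‖) ^ 2) hu (ker_meas ζ).aestronglyMeasurable ?_
  filter_upwards [ae_restrict_mem measurableSet_Ioo] with x hx using ker_bd ζ hζ x hx

lemma Phi_diff {u : ℝ → ℂ} (hu : IntegrableOn u (Ioo (-1) 1)) :
    DifferentiableOn ℂ (Phi u) (Metric.ball 0 1) := by
  intro ζ₀ hζ₀
  apply DifferentiableAt.differentiableWithinAt
  unfold Phi
  refine DifferentiableAt.const_mul ?_ _
  have hζ₀' : ‖ζ₀‖ < 1 := by simpa using hζ₀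
  obtain ⟨ρ, hρ1, hρ2⟩ := exists_between hζ₀'
  have hs : Metric.ball (0:ℂ) ρ ∈ 𝓝 ζ₀ := Metric.isOpen_ball.mem_nhds (by simpa using hρ1)
  have hρ : ρ < 1 := hρ2
  have hρ0 : 0 ≤ ρ := (norm_nonneg _).trans hρ1.le
  refine (hasDerivAt_integral_of_dominated_loc_of_deriv_le (𝕜 := ℂ)
    (F := fun ζ x => u x * ((1 - ζ ^ 2) / (1 - 2 * ζ * x + ζ ^ 2)))
    (μ := volume.restrict (Ioo (-1:ℝ) 1))
    (F' := fun ζ x => u x * (((-2 * ζ) * (1 - 2 * ζ * x + ζ ^ 2) - (1 - ζ ^ 2) * (-2 * x + 2 * ζ))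
       / (1 - 2 * ζ * x + ζ ^ 2) ^ 2))
    (bound := fun x => ‖u x‖ * (16 / (1 - ρ) ^ 4)) hs ?_ (Phi_int hu ζ₀ hζ₀') ?_ ?_ ?_ ?_).2.differentiableAt
  · filter_upwards [hs] with ζ hζ
    exact (Phi_int hu ζ (by simp at hζ; linarith)).aestronglyMeasurable
  · refine hu.aestronglyMeasurable.mul (Measurable.aestronglyMeasurable ?_)
    fun_prop
  · filter_upwards [ae_restrict_mem measurableSet_Ioo] with x hx ζ hζ
    have hζ1 : ‖ζ‖ < ρ := by simpa using hζ
    rw [norm_mul]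
    gcongr
    rw [norm_div, norm_pow]
    have h1 := den_lb ζ (by linarith) x hx
    have h2 : (1 - ρ) ^ 2 ≤ ‖1 - 2 * ζ * x + ζ ^ 2‖ := le_trans (by gcongr) h1
    have h3 : (1 - ρ) ^ 4 ≤ ‖1 - 2 * ζ * x + ζ ^ 2‖ ^ 2 := by
      calc (1 - ρ) ^ 4 = ((1 - ρ) ^ 2) ^ 2 := by ring
        _ ≤ _ := by gcongr
    have hz1 : ‖ζ‖ ≤ 1 := by linarith
    have hx1 : ‖(x:ℂ)‖ ≤ 1 := by
      rw [Complex.norm_real, Real.norm_eq_abs, abs_le]; exact ⟨hx.1.le, hx.2.le⟩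
    have n1 : ‖-2 * ζ‖ ≤ 2 := by simp; linarith
    have n2 : ‖1 - 2 * ζ * x + ζ ^ 2‖ ≤ 4 := by
      refine (norm_add_le _ _).trans ?_
      have := norm_sub_le (1:ℂ) (2 * ζ * x)
      have h5 : ‖2 * ζ * (x:ℂ)‖ ≤ 2 := by
        rw [norm_mul, norm_mul]
        have := mul_le_mul hz1 hx1 (norm_nonneg _) zero_le_one
        simp at this ⊢; linarith
      have h6 : ‖ζ ^ 2‖ ≤ 1 := by rw [norm_pow]; exact pow_le_one₀ (norm_nonneg _) hz1
      simp only [norm_one] at this; linarith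
    have n3 : ‖1 - ζ ^ 2‖ ≤ 2 := by
      refine (norm_sub_le _ _).trans ?_
      rw [norm_one, norm_pow]
      nlinarith [norm_nonneg ζ]
    have n4 : ‖-2 * (x:ℂ) + 2 * ζ‖ ≤ 4 := by
      refine (norm_add_le _ _).trans ?_
      simp at hx1 ⊢; linarith
    have hpos : 0 < 1 - ρ := by linarith
    gcongr
    refine (norm_sub_le _ _).trans ?_
    rw [norm_mul (-2 * ζ), norm_mul (1 - ζ ^ 2)]
    have := mul_le_mul n1 n2 (norm_nonneg _) (by norm_num)
    have := mul_le_mul n3 n4 (norm_nonneg _) (by norm_num)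
    linarith
  · exact hu.norm.mul_const _
  · filter_upwards [ae_restrict_mem measurableSet_Ioo] with x hx ζ hζ
    have hζ1 : ‖ζ‖ < ρ := by simpa using hζ
    have hne := den_ne ζ (by linarith) x hx
    refine HasDerivAt.const_mul _ ?_
    refine HasDerivAt.fun_div ?_ ?_ hne
    · simpa using ((hasDerivAt_id ζ).fun_pow 2).const_sub 1
    · have := (((hasDerivAt_id ζ).const_mul 2).mul_const (x:ℂ)).const_sub 1 |>.fun_add ((hasDerivAt_id ζ).fun_pow 2)
      simpa using this

lemma Phi_eq {u : ℝ → ℂ} (ζ : ℂ) (hζ : ‖ζ‖ < 1) (h0 : ζ ≠ 0) :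
    Phi u ζ = -((1 - ζ ^ 2) / (2 * ζ)) * Cau u ((1 + ζ ^ 2) / (2 * ζ)) := by
  unfold Phi Cau
  rw [mul_left_comm]
  congr 1
  rw [← integral_const_mul]
  refine setIntegral_congr_fun (E := ℂ) measurableSet_Ioo (fun (x : ℝ) hx => ?_)
  have hne := den_ne ζ hζ x hx
  have : (x:ℂ) - (1 + ζ ^ 2) / (2 * ζ) = -(1 - 2 * ζ * x + ζ ^ 2) / (2 * ζ) := by
    field_simp; ring
  rw [this]
  field_simp

lemma ker_re (ζ : ℂ) (hζ : ‖ζ‖ < 1) (x : ℝ) (hx : x ∈ Ioo (-1 : ℝ) 1) :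
    0 ≤ ((1 - ζ ^ 2) / (1 - 2 * ζ * x + ζ ^ 2)).re := by
  have h : ζ.re ^ 2 + ζ.im ^ 2 < 1 := by
    have := Complex.sq_norm ζ
    rw [Complex.normSq_apply] at this
    nlinarith [norm_nonneg ζ]
  rw [Complex.div_re, ← add_div]
  refine div_nonneg ?_ (Complex.normSq_nonneg _)
  simp [pow_two]
  obtain ⟨h1, h2⟩ := hx
  have h3 : 0 ≤ 1 + (ζ.re ^ 2 + ζ.im ^ 2) - 2 * x * ζ.re := by
    nlinarith [sq_nonneg (x - ζ.re), sq_nonneg ζ.im]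
  have := mul_nonneg (by linarith : 0 ≤ 1 - (ζ.re ^ 2 + ζ.im ^ 2)) h3
  nlinarith

lemma Phi_re {p : ℝ → ℝ} (hp : IntegrableOn (fun x => (p x : ℂ)) (Ioo (-1) 1)) (h0 : ∀ x, 0 ≤ p x)
    (ζ : ℂ) (hζ : ‖ζ‖ < 1) : 0 ≤ (Phi (fun x => (p x : ℂ)) ζ).re := by
  unfold Phi
  rw [← Complex.ofReal_inv, Complex.re_ofReal_mul]
  refine mul_nonneg (by positivity) ?_
  have := Complex.reCLM.integral_comp_comm (Phi_int hp ζ hζ)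
  simp only [Complex.reCLM_apply] at this
  rw [← this]
  refine setIntegral_nonneg measurableSet_Ioo fun x hx => ?_
  rw [Complex.re_ofReal_mul]
  exact mul_nonneg (h0 x) (ker_re ζ hζ x hx)

lemma cauchy_deriv {R : ℂ → ℂ} (hR : DiffContOnCl ℂ R (Metric.ball 0 1)) {z₀ z₁ : ℂ}
    (h0 : ‖z₀‖ < 1) (h1 : 1 < ‖z₁‖) :
    (∮ z in C(0, 1), (((z - z₀) ^ 2)⁻¹ - ((z - z₁) ^ 2)⁻¹) * R z)
      = (2 * Real.pi * Complex.I : ℂ) * deriv R z₀ := by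
  have hcR : ContinuousOn R (Metric.closedBall 0 1) := hR.continuousOn_ball
  have hz0 : z₀ ∈ Metric.ball (0:ℂ) 1 := by simpa using h0
  have hs0 : ∀ z ∈ Metric.sphere (0:ℂ) 1, z - z₀ ≠ 0 := by
    intro z hz h
    rw [sub_eq_zero] at h
    simp at hz; rw [h] at hz; linarith
  have hs1 : ∀ z ∈ Metric.closedBall (0:ℂ) 1, z - z₁ ≠ 0 := by
    intro z hz h
    rw [sub_eq_zero] at h
    simp at hz; rw [h] at hz; linarith
  have hsub : Metric.sphere (0:ℂ) 1 ⊆ Metric.closedBall 0 1 := Metric.sphere_subset_closedBall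
  have c0 : ContinuousOn (fun z => ((z - z₀) ^ 2)⁻¹) (Metric.sphere 0 1) := by
    refine ContinuousOn.inv₀ (by fun_prop) fun z hz => pow_ne_zero _ (hs0 z hz)
  have c1 : ContinuousOn (fun z => ((z - z₁) ^ 2)⁻¹) (Metric.closedBall 0 1) := by
    refine ContinuousOn.inv₀ (by fun_prop) fun z hz => pow_ne_zero _ (hs1 z hz)
  have e1 : (∮ z in C(0, 1), ((z - z₁) ^ 2)⁻¹ * R z) = 0 := by
    refine Complex.circleIntegral_eq_zero_of_differentiable_on_off_countable zero_le_one
      countable_empty (c1.mul hcR) ?_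
    intro z hz
    have hz' := hz.1
    have : DifferentiableAt ℂ R z := hR.differentiableAt Metric.isOpen_ball hz'
    refine DifferentiableAt.mul ?_ this
    refine DifferentiableAt.inv (by fun_prop) (pow_ne_zero _ (hs1 z (Metric.ball_subset_closedBall hz')))
  have hds : DiffContOnCl ℂ (dslope R z₀) (Metric.ball 0 1) := by
    refine ⟨?_, ?_⟩
    · exact (Complex.differentiableOn_dslope (Metric.isOpen_ball.mem_nhds hz0)).2 hR.differentiableOn
    · rw [closure_ball _ one_ne_zero]
      refine (continuousOn_dslope (mem_of_superset (Metric.isOpen_ball.mem_nhds hz0) Metric.ball_subset_closedBall)).2 ⟨hcR, hR.differentiableAt Metric.isOpen_ball hz0⟩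
  have e2 := hds.circleIntegral_sub_inv_smul hz0
  rw [dslope_same] at e2
  have e3 : (∮ z in C(0, 1), (z - z₀)⁻¹ • dslope R z₀ z) = ∮ z in C(0, 1), (((z - z₀) ^ 2)⁻¹ * R z - ((z - z₀) ^ 2)⁻¹ * R z₀) := by
    refine circleIntegral.integral_congr zero_le_one fun z hz => ?_
    have := hs0 z hz
    have hne : z ≠ z₀ := by rwa [sub_ne_zero] at this
    rw [dslope_of_ne _ hne, slope_def_field, smul_eq_mul]
    field_simp
  have i0 : CircleIntegrable (fun z => ((z - z₀) ^ 2)⁻¹ * R z) 0 1 :=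
    ContinuousOn.circleIntegrable zero_le_one (c0.mul (hcR.mono hsub))
  have i1 : CircleIntegrable (fun z => ((z - z₁) ^ 2)⁻¹ * R z) 0 1 :=
    ContinuousOn.circleIntegrable zero_le_one ((c1.mono hsub).mul (hcR.mono hsub))
  have i2 : CircleIntegrable (fun z => ((z - z₀) ^ 2)⁻¹ * R z₀) 0 1 :=
    ContinuousOn.circleIntegrable zero_le_one (c0.mul continuousOn_const)
  have e4 : (∮ z in C(0, 1), ((z - z₀) ^ 2)⁻¹ * R z₀) = 0 := by
    have := circleIntegral.integral_sub_zpow_of_ne (n := -2) (by norm_num) 0 z₀ 1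
    have h2 : (∮ z in C(0, 1), ((z - z₀) ^ 2)⁻¹ * R z₀) = ∮ z in C(0, 1), R z₀ • (z - z₀) ^ (-2 : ℤ) := by
      congr 1; ext z
      rw [smul_eq_mul, mul_comm, zpow_neg]; rfl
    rw [h2, circleIntegral.integral_smul, this, smul_zero]
  rw [e3, circleIntegral.integral_sub i0 i2, e4, sub_zero, smul_eq_mul] at e2
  have : (∮ z in C(0, 1), (((z - z₀) ^ 2)⁻¹ - ((z - z₁) ^ 2)⁻¹) * R z) =
     ∮ z in C(0, 1), ((((z - z₀) ^ 2)⁻¹ * R z - ((z - z₁) ^ 2)⁻¹ * R z)) := by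
    congr 1; ext z; ring
  rw [this, circleIntegral.integral_sub i0 i1, e1, sub_zero, e2]

lemma poisson_int {z₀ : ℂ} (h0 : ‖z₀‖ < 1) :
    ∫ θ in (0:ℝ)..2 * Real.pi, (1 - ‖z₀‖ ^ 2) / ‖circleMap 0 1 θ - z₀‖ ^ 2 = 2 * Real.pi := by
  have hf : DiffContOnCl ℂ (fun _ : ℂ => (1:ℂ)) (Metric.ball 0 1) := diffContOnCl_const
  have := hf.circleAverage_poissonKernel_smul' (w := z₀) (by simpa using h0)
  rw [Real.circleAverage_def] at this
  simp only [circleMap_sub_center, sub_zero, Complex.real_smul, mul_one] at this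
  rw [intervalIntegral.integral_ofReal] at this
  simp only [norm_circleMap_zero, abs_one, one_pow] at this
  have hpi := Real.pi_pos
  norm_cast at this
  field_simp at this
  linarith

lemma ker_est {a ω : ℂ} {r : ℝ} (ha : ‖a‖ = 1) (hω : ‖ω‖ = 1) (h0 : 0 < r) (h1 : r < 1) :
    ‖((ω - r * a) ^ 2)⁻¹ - ((ω - a / r) ^ 2)⁻¹‖ ≤ 4 * (1 - r) / ‖ω - r * a‖ ^ 3 ∧
    1 - r ≤ ‖ω - r * a‖ ∧ ‖ω - a‖ ≤ 2 * ‖ω - r * a‖ := by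
  have hr : (r:ℂ) ≠ 0 := by exact_mod_cast h0.ne'
  have hra : ‖(r:ℂ) * a‖ = r := by rw [norm_mul, ha, Complex.norm_real, Real.norm_of_nonneg h0.le, mul_one]
  have e1 : 1 - r ≤ ‖ω - r * a‖ := by
    have := norm_sub_norm_le ω (r * a)
    rwa [hω, hra] at this
  have e2 : ‖ω - a‖ ≤ 2 * ‖ω - r * a‖ := by
    have h3 : ‖r * a - a‖ = 1 - r := by
      have : r * a - a = ((r - 1 : ℝ) : ℂ) * a := by push_cast; ring
      rw [this, norm_mul, ha, Complex.norm_real, mul_one, Real.norm_eq_abs, abs_of_neg (by linarith)]; ring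
    have := norm_add_le (ω - r * a) (r * a - a)
    rw [sub_add_sub_cancel, h3] at this
    linarith
  refine ⟨?_, e1, e2⟩
  set e := ‖ω - r * a‖ with he
  have he0 : 0 < e := by linarith
  have h5 : ‖ω - a / r‖ = e / r := by
    have : r ^ 2 * ‖ω - a / r‖ ^ 2 = e ^ 2 := by
      have hω2 : ω.re * ω.re + ω.im * ω.im = 1 := by
        rw [← Complex.normSq_apply, ← Complex.sq_norm, hω]; norm_num
      have ha2 : a.re * a.re + a.im * a.im = 1 := by
        rw [← Complex.normSq_apply, ← Complex.sq_norm, ha]; norm_num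
      have : r ^ 2 * ‖ω - a / r‖ ^ 2 = ‖r * ω - a‖ ^ 2 := by
        have : r * ω - a = r * (ω - a / r) := by field_simp
        rw [this, norm_mul, Complex.norm_real, mul_pow, Real.norm_eq_abs, sq_abs]
      rw [this, he, Complex.sq_norm, Complex.sq_norm, Complex.normSq_apply, Complex.normSq_apply]
      simp
      linear_combination (r ^ 2 - 1) * hω2 + (1 - r ^ 2) * ha2
    rw [eq_div_iff h0.ne', ← sq_eq_sq₀ (by positivity) he0.le, ← this]; ring
  have hA : ω - r * a ≠ 0 := by rw [← norm_pos_iff]; exact he0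
  have hB : ω - a / r ≠ 0 := by rw [← norm_pos_iff, h5]; positivity
  have hk : ((ω - r * a) ^ 2)⁻¹ - ((ω - a / r) ^ 2)⁻¹ =
    (r * a - a / r) * ((ω - r * a) + (ω - a / r)) / ((ω - r * a) ^ 2 * (ω - a / r) ^ 2) := by
    have hA2 := pow_ne_zero 2 hA
    have hB2 := pow_ne_zero 2 hB
    rw [inv_sub_inv hA2 hB2]
    congr 1
    ring
  have h6 : ‖r * a - a / r‖ = (1 - r ^ 2) / r := by
    have : r * a - a / r = ((-((1 - r ^ 2) / r) : ℝ) : ℂ) * a := by push_cast; field_simp; ring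
    rw [this, norm_mul, ha, Complex.norm_real, mul_one, norm_neg, Real.norm_of_nonneg]
    exact div_nonneg (by nlinarith) h0.le
  have h7 : ‖(ω - r * a) + (ω - a / r)‖ ≤ e + e / r := by
    rw [← h5]; exact norm_add_le _ _
  rw [hk, norm_div, norm_mul, norm_mul, norm_pow, norm_pow, h5, h6, ← he]
  calc (1 - r ^ 2) / r * ‖(ω - r * a) + (ω - a / r)‖ / (e ^ 2 * (e / r) ^ 2)
      ≤ (1 - r ^ 2) / r * (e + e / r) / (e ^ 2 * (e / r) ^ 2) := by
        have : 0 ≤ (1 - r ^ 2) / r := div_nonneg (by nlinarith) h0.le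
        gcongr
    _ = (1 - r) * (1 + r) ^ 2 / e ^ 3 := by field_simp; ring
    _ ≤ 4 * (1 - r) / e ^ 3 := by
        refine div_le_div_of_nonneg_right ?_ (by positivity)
        have : (1 + r) ^ 2 ≤ 4 := by nlinarith
        nlinarith

lemma fatou_key {R : ℂ → ℂ} (hR : DiffContOnCl ℂ R (Metric.ball 0 1)) {a : ℂ} (ha : ‖a‖ = 1)
    {L : ℝ} (hL : 0 ≤ L) (hRL : ∀ ω : ℂ, ‖ω‖ = 1 → ‖R ω‖ ≤ L * ‖ω - a‖)
    (hRo : ∀ η > 0, ∃ δ > 0, ∀ ω : ℂ, ‖ω‖ = 1 → ‖ω - a‖ < δ → ‖R ω‖ ≤ η * ‖ω - a‖) :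
    Tendsto (fun r : ℝ => deriv R (r * a)) (𝓝[<] 1) (𝓝 0) := by
  have main : ∀ η > 0, ∃ B : ℝ, 0 ≤ B ∧ ∀ r : ℝ, 0 < r → r < 1 →
      ‖deriv R (r * a)‖ ≤ η + B * Real.sqrt (1 - r) := by
    intro η hη
    obtain ⟨δ, hδ, hd⟩ := hRo (η / 8) (by positivity)
    refine ⟨16 * (L / δ), by positivity, fun r h0 h1 => ?_⟩
    have hra : ‖(r:ℂ) * a‖ = r := by rw [norm_mul, ha, Complex.norm_real, Real.norm_of_nonneg h0.le, mul_one]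
    have hra' : 1 < ‖a / (r:ℂ)‖ := by
      rw [norm_div, ha, Complex.norm_real, Real.norm_of_nonneg h0.le, lt_div_iff₀ h0]; linarith
    have hc := cauchy_deriv hR (z₀ := r * a) (z₁ := a / r) (by rw [hra]; exact h1) hra'
    set s := Real.sqrt (1 - r) with hs
    have hs2 : s ^ 2 = 1 - r := Real.sq_sqrt (by linarith)
    have hs0 : 0 < s := Real.sqrt_pos.2 (by linarith)
    set A := η + 8 * (L / δ) * s with hA
    set B := 8 * (L / δ) * s with hB
    have hB0 : 0 ≤ B := by positivity
    have hpt : ∀ ω : ℂ, ‖ω‖ = 1 → ‖(((ω - r * a) ^ 2)⁻¹ - ((ω - a / r) ^ 2)⁻¹) * R ω‖ ≤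
        A * ((1 - ‖(r:ℂ) * a‖ ^ 2) / ‖ω - r * a‖ ^ 2) + B := by
      intro ω hω
      obtain ⟨k1, k2, k3⟩ := ker_est ha hω h0 h1
      set e := ‖ω - r * a‖ with he
      have he0 : 0 < e := by linarith
      have hR1 : ‖R ω‖ ≤ η / 8 * ‖ω - a‖ + L / δ * ‖ω - a‖ ^ 2 := by
        rcases lt_or_ge ‖ω - a‖ δ with h | h
        · have := hd ω hω h
          have : 0 ≤ L / δ * ‖ω - a‖ ^ 2 := by positivity
          linarith
        · have h5 := hRL ω hω
          have : L * ‖ω - a‖ ≤ L / δ * ‖ω - a‖ ^ 2 := by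
            rw [div_mul_eq_mul_div, le_div_iff₀ hδ]
            have := mul_le_mul_of_nonneg_left h (by positivity : 0 ≤ L * ‖ω - a‖)
            nlinarith
          have : 0 ≤ η / 8 * ‖ω - a‖ := by positivity
          linarith
      have hR2 : ‖R ω‖ ≤ η / 4 * e + 4 * (L / δ) * e ^ 2 := by
        have : ‖ω - a‖ ^ 2 ≤ (2 * e) ^ 2 := by gcongr
        have h6 : L / δ * ‖ω - a‖ ^ 2 ≤ L / δ * (2 * e) ^ 2 := by gcongr
        have h7 : η / 8 * ‖ω - a‖ ≤ η / 8 * (2 * e) := by gcongr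
        nlinarith
      rw [norm_mul, hra]
      calc _ ≤ 4 * (1 - r) / e ^ 3 * (η / 4 * e + 4 * (L / δ) * e ^ 2) := by
            gcongr
        _ = η * (s ^ 2 / e ^ 2) + 16 * (L / δ) * s * (s / e) := by
            rw [← hs2]; field_simp; ring
        _ ≤ η * (s ^ 2 / e ^ 2) + 16 * (L / δ) * s * ((s ^ 2 / e ^ 2 + 1) / 2) := by
            refine add_le_add_right (mul_le_mul_of_nonneg_left ?_ (by positivity)) _
            have := sq_nonneg (s / e - 1)
            have h2 : (s / e) ^ 2 = s ^ 2 / e ^ 2 := div_pow _ _ _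
            nlinarith
        _ = A * (s ^ 2 / e ^ 2) + B := by rw [hA, hB]; ring
        _ ≤ _ := by
            have : 0 ≤ A := by positivity
            gcongr
            nlinarith
    have hI : IntervalIntegrable (fun θ => A * ((1 - ‖(r:ℂ) * a‖ ^ 2) / ‖circleMap 0 1 θ - r * a‖ ^ 2) + B) volume 0 (2 * Real.pi) := by
      apply Continuous.intervalIntegrable
      have : ∀ θ, ‖circleMap 0 1 θ - r * a‖ ^ 2 ≠ 0 := by
        intro θ
        obtain ⟨k1, k2, k3⟩ := ker_est (ω := circleMap 0 1 θ) ha (by simp) h0 h1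
        have : 0 < ‖circleMap 0 1 θ - r * a‖ := by linarith
        positivity
      fun_prop (disch := assumption)
    have hn : ‖(∮ z in C(0, 1), (((z - r * a) ^ 2)⁻¹ - ((z - a / r) ^ 2)⁻¹) * R z)‖ ≤
        ∫ θ in (0:ℝ)..2 * Real.pi, (A * ((1 - ‖(r:ℂ) * a‖ ^ 2) / ‖circleMap 0 1 θ - r * a‖ ^ 2) + B) := by
      unfold circleIntegral
      refine intervalIntegral.norm_integral_le_of_norm_le Real.two_pi_pos.le ?_ hI
      refine Eventually.of_forall fun θ _ => ?_
      rw [norm_smul]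
      have := hpt (circleMap 0 1 θ) (by simp)
      simpa using this
    have hI2 : IntervalIntegrable (fun θ => A * ((1 - ‖(r:ℂ) * a‖ ^ 2) / ‖circleMap 0 1 θ - r * a‖ ^ 2)) volume 0 (2 * Real.pi) := by
      simpa using hI.sub (g := fun _ => B) intervalIntegrable_const
    rw [intervalIntegral.integral_add hI2 intervalIntegrable_const, intervalIntegral.integral_const_mul,
      poisson_int (by rw [hra]; exact h1), hc, norm_mul] at hn
    have hp := Real.pi_pos
    have : ‖(2 * Real.pi * Complex.I : ℂ)‖ = 2 * Real.pi := by
      simp [abs_of_pos hp]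
    rw [this] at hn
    simp only [intervalIntegral.integral_const, sub_zero, smul_eq_mul] at hn
    have : ‖deriv R (r * a)‖ ≤ A + B := by
      have h9 : 2 * Real.pi * ‖deriv R (r * a)‖ ≤ 2 * Real.pi * (A + B) := by linarith
      exact le_of_mul_le_mul_left h9 (by positivity)
    rw [hA, hB] at this
    linarith
  rw [Metric.tendsto_nhds]
  intro ε hε
  obtain ⟨B, hB, h⟩ := main (ε / 2) (by positivity)
  have hlim : Tendsto (fun r : ℝ => ε / 2 + B * Real.sqrt (1 - r)) (𝓝[<] 1) (𝓝 (ε / 2 + B * Real.sqrt (1 - 1))) := by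
    apply Tendsto.mono_left _ nhdsWithin_le_nhds
    apply Continuous.tendsto
    fun_prop
  have h2 := hlim.eventually (gt_mem_nhds (show ε / 2 + B * Real.sqrt (1 - 1) < ε by simp; linarith))
  have h3 : ∀ᶠ r : ℝ in 𝓝[<] 1, r ∈ Ioo (0:ℝ) 1 := Ioo_mem_nhdsLT (by norm_num)
  filter_upwards [h2, h3] with r hr1 hr2
  rw [dist_zero_right]
  exact (h r hr2.1 hr2.2).trans_lt hr1

lemma fatou {G : ℂ → ℂ} (hG : DifferentiableOn ℂ G (Metric.ball 0 1))
    (hb : ∀ ζ ∈ Metric.ball (0:ℂ) 1, ‖G ζ‖ ≤ 1) :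
    ∀ᵐ θ : ℝ, ∃ c, Tendsto (fun r : ℝ => G (r * circleMap 0 1 θ)) (𝓝[<] 1) (𝓝 c) := by
  obtain ⟨P, hP⟩ := hG.isExactOn_ball
  have hPL : LipschitzOnWith 1 P (Metric.ball 0 1) :=
    (convex_ball (0:ℂ) 1).lipschitzOnWith_of_nnnorm_hasDerivWithin_le
      (fun x hx => (hP x hx).hasDerivWithinAt) (fun x hx => hb x hx)
  obtain ⟨Q, hQ, hPQ⟩ := hPL.extend_finite_dimension
  set K := lipschitzExtensionConstant ℂ * 1 with hK
  have hQd : ∀ z ∈ Metric.ball (0:ℂ) 1, HasDerivAt Q (G z) z := by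
    intro z hz
    refine (hP z hz).congr_of_eventuallyEq ?_
    filter_upwards [Metric.isOpen_ball.mem_nhds hz] with y hy using (hPQ hy).symm
  have hlip : LipschitzWith (K * 1) (fun θ => Q (circleMap 0 1 θ)) := by
    refine hQ.comp ?_
    simpa using lipschitzWith_circleMap 0 1
  filter_upwards [hlip.ae_differentiableAt_real] with θ hθ
  set a := circleMap 0 1 θ with ha
  have hna : ‖a‖ = 1 := by simp [ha]
  have ha0 : a ≠ 0 := by rw [← norm_pos_iff, hna]; norm_num
  set D := deriv (fun θ => Q (circleMap 0 1 θ)) θ with hD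
  set c := D / (a * Complex.I) with hc
  refine ⟨c, ?_⟩
  set R : ℂ → ℂ := fun z => Q z - Q a - c * (z - a) with hRdef
  have hRd : ∀ z ∈ Metric.ball (0:ℂ) 1, HasDerivAt R (G z - c) z := by
    intro z hz
    have := ((hQd z hz).sub_const (Q a)).fun_sub (((hasDerivAt_id z).sub_const a).const_mul c)
    simpa using this
  have hRc : Continuous R := by
    have := hQ.continuous
    fun_prop
  have hDC : DiffContOnCl ℂ R (Metric.ball 0 1) :=
    ⟨fun z hz => (hRd z hz).differentiableAt.differentiableWithinAt, hRc.continuousOn⟩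
  have hLip : ∀ ω : ℂ, ‖R ω‖ ≤ (K + ‖c‖) * ‖ω - a‖ := by
    intro ω
    have h1 := hQ.dist_le_mul ω a
    rw [dist_eq_norm, dist_eq_norm] at h1
    calc ‖R ω‖ ≤ ‖Q ω - Q a‖ + ‖c * (ω - a)‖ := norm_sub_le _ _
      _ ≤ _ := by rw [norm_mul, add_mul]; gcongr
  have hkey := fatou_key hDC hna (by positivity) (fun ω _ => hLip ω) ?_
  · have h3 : ∀ᶠ r : ℝ in 𝓝[<] 1, r ∈ Ioo (0:ℝ) 1 := Ioo_mem_nhdsLT (by norm_num)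
    have h4 : (fun r : ℝ => G (r * a) - c) =ᶠ[𝓝[<] 1] (fun r : ℝ => deriv R (r * a)) := by
      filter_upwards [h3] with r hr
      refine (hRd _ ?_).deriv.symm
      rw [mem_ball_zero_iff, norm_mul, hna, Complex.norm_real, Real.norm_of_nonneg hr.1.le, mul_one]
      exact hr.2
    have := (hkey.congr' h4.symm).add_const c
    simpa using this
  · -- little o
    intro η hη
    have hf : HasDerivAt (fun φ : ℝ => R (circleMap 0 1 φ)) 0 θ := by
      have h1 : HasDerivAt (fun θ => Q (circleMap 0 1 θ)) D θ := hθ.hasDerivAt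
      have h2 := (h1.sub_const (Q a)).fun_sub (((hasDerivAt_circleMap 0 1 θ).sub_const a).const_mul c)
      have h3 : D - c * (circleMap 0 1 θ * Complex.I) = 0 := by
        rw [← ha, hc]; field_simp; ring
      rwa [h3] at h2
    rw [hasDerivAt_iff_isLittleO] at hf
    have hη2 : 0 < η * (2 / 3) := by positivity
    have hf2 := hf.bound hη2
    obtain ⟨δ, hδ, hd⟩ := Metric.eventually_nhds_iff.1 hf2
    refine ⟨min (1 / 2) (δ * (2 / 3)), by positivity, fun ω hω hωa => ?_⟩
    have hx : ‖ω / a - 1‖ = ‖ω - a‖ := by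
      have : ω / a - 1 = (ω - a) / a := by field_simp
      rw [this, norm_div, hna, div_one]
    have hx2 : ‖ω / a - 1‖ ≤ 1 / 2 := by rw [hx]; exact (hωa.trans_le (min_le_left _ _)).le
    have hx3 := Complex.norm_log_one_add_half_le_self hx2
    rw [add_sub_cancel] at hx3
    set ψ := (Complex.log (ω / a)).im with hψ
    have hωa0 : ω / a ≠ 0 := div_ne_zero (by rw [← norm_pos_iff, hω]; norm_num) ha0
    have hlog : Complex.log (ω / a) = ψ * Complex.I := by
      apply Complex.ext
      · simp [Complex.log_re, hω, hna]
      · simp [hψ]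
    have hωe : ω = circleMap 0 1 (θ + ψ) := by
      have h5 := Complex.exp_log hωa0
      rw [hlog] at h5
      have : ω = a * Complex.exp (ψ * Complex.I) := by rw [h5]; field_simp
      rw [this, ha]
      simp [circleMap, add_mul, Complex.exp_add]
    have hψ2 : |ψ| ≤ 3 / 2 * ‖ω - a‖ := by
      rw [← hx]
      refine le_trans ?_ hx3
      rw [hlog]; simp
    have h6 := hd (y := θ + ψ) (by
      rw [Real.dist_eq, add_sub_cancel_left]
      have := hωa.trans_le (min_le_right _ _)
      linarith)
    have hRa : R (circleMap 0 1 θ) = 0 := by simp [hRdef, ← ha]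
    rw [hRa, ← hωe] at h6
    simp only [smul_zero, sub_zero, add_sub_cancel_left, Real.norm_eq_abs] at h6
    calc ‖R ω‖ ≤ η * (2 / 3) * |ψ| := h6
      _ ≤ η * (2 / 3) * (3 / 2 * ‖ω - a‖) := by gcongr
      _ = η * ‖ω - a‖ := by ring


lemma lebker {φ : ℝ → ℝ} (h0 : ∀ x, 0 ≤ φ x) (hφ : IntegrableOn φ (Ioo (-1:ℝ) 1)) {t : ℝ}
    (ht : t ∈ Ioo (-1:ℝ) 1)
    (hL : Tendsto (fun s : ℝ => s⁻¹ * ∫ x in Metric.closedBall t s ∩ Ioo (-1:ℝ) 1, φ x)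
      (𝓝[>] 0) (𝓝 0)) :
    Tendsto (fun b : ℝ => ∫ x in Ioo (-1:ℝ) 1, φ x * (b / (max |x - t| b) ^ 2)) (𝓝[>] 0) (𝓝 0) := by
  set m : ℝ → ℝ := fun s => s⁻¹ * ∫ x in Metric.closedBall t s ∩ Ioo (-1:ℝ) 1, φ x with hm
  have hM0 : ∀ s, 0 ≤ ∫ x in Metric.closedBall t s ∩ Ioo (-1:ℝ) 1, φ x := fun s =>
    integral_nonneg h0
  have hm0 : ∀ s, 0 < s → 0 ≤ m s := fun s hs => mul_nonneg (by positivity) (hM0 s)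
  have hM1 : ∀ s, ∫ x in Metric.closedBall t s ∩ Ioo (-1:ℝ) 1, φ x ≤ ∫ x in Ioo (-1:ℝ) 1, φ x :=
    fun s => setIntegral_mono_set hφ (ae_of_all _ h0) inter_subset_right.eventuallyLE
  obtain ⟨C, hC⟩ : ∃ C, ∀ s, 0 < s → m s ≤ C := by
    have := hL.eventually (gt_mem_nhds (show (0:ℝ) < 1 by norm_num))
    obtain ⟨δ, hδ, hδ2⟩ := (mem_nhdsGT_iff_exists_Ioo_subset).1 this
    have hδ : 0 < δ := hδ
    refine ⟨max 1 (δ⁻¹ * ∫ x in Ioo (-1:ℝ) 1, φ x), fun s hs => ?_⟩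
    by_cases hsd : s < δ
    · exact le_max_of_le_left (le_of_lt (hδ2 ⟨hs, hsd⟩))
    · refine le_max_of_le_right ?_
      have : s⁻¹ ≤ δ⁻¹ := inv_anti₀ hδ (not_lt.1 hsd)
      exact mul_le_mul this (hM1 s) (hM0 s) (by positivity)
  have hsum : Summable (fun k : ℕ => 4 * (1/2:ℝ)^k * C) :=
    ((summable_geometric_of_lt_one (by norm_num) (by norm_num)).mul_left 4).mul_right C
  have hS : Tendsto (fun b : ℝ => ∑' k : ℕ, 4 * (1/2:ℝ)^k * m (2^k * b)) (𝓝[>] 0)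
      (𝓝 (∑' k : ℕ, 0)) := by
    refine tendsto_tsum_of_dominated_convergence hsum (fun k => ?_) ?_
    · have : Tendsto (fun b : ℝ => 2^k * b) (𝓝[>] 0) (𝓝[>] 0) := by
        refine tendsto_nhdsWithin_iff.2 ⟨?_, ?_⟩
        · have : Tendsto (fun b : ℝ => 2^k * b) (𝓝 0) (𝓝 (2^k*0)) := by
            exact (continuous_const.mul continuous_id).tendsto 0
          rw [mul_zero] at this
          exact this.mono_left nhdsWithin_le_nhds
        · filter_upwards [self_mem_nhdsWithin] with b hb
          have : 0 < b := hb
          exact mem_Ioi.2 (by positivity)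
      simpa using (hL.comp this).const_mul (4 * (1/2:ℝ)^k)
    · filter_upwards [self_mem_nhdsWithin] with b hb k
      have hb : 0 < b := hb
      have := hm0 (2^k*b) (by positivity)
      rw [Real.norm_eq_abs, abs_of_nonneg (by positivity)]
      exact mul_le_mul_of_nonneg_left (hC _ (by positivity)) (by positivity)
  rw [tsum_zero] at hS
  refine squeeze_zero' ?_ ?_ hS
  · filter_upwards [self_mem_nhdsWithin] with b hb
    have hb : 0 < b := hb
    exact integral_nonneg fun x => mul_nonneg (h0 x) (by positivity)
  · filter_upwards [self_mem_nhdsWithin] with b hb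
    have hb : 0 < b := hb
    obtain ⟨N, hN⟩ : ∃ N : ℕ, 2 < 2^N * b := by
      obtain ⟨N, hN⟩ := pow_unbounded_of_one_lt (2/b) (show (1:ℝ) < 2 by norm_num)
      exact ⟨N, by rwa [div_lt_iff₀ hb] at hN⟩
    have hint : ∀ k : ℕ, IntegrableOn (fun x => (4 / b * (1/4)^k) *
        (Metric.closedBall t (2^k*b)).indicator φ x) (Ioo (-1:ℝ) 1) := fun k =>
      (hφ.indicator Metric.isClosed_closedBall.measurableSet).const_mul _
    have hle : ∀ x ∈ Ioo (-1:ℝ) 1, φ x * (b / (max |x - t| b) ^ 2) ≤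
        ∑ k ∈ Finset.range (N+1), (4 / b * (1/4)^k) *
        (Metric.closedBall t (2^k*b)).indicator φ x := by
      intro x hx
      have hterm : ∀ k ∈ Finset.range (N+1), 0 ≤ (4 / b * (1/4)^k) *
        (Metric.closedBall t (2^k*b)).indicator φ x := fun k _ =>
        mul_nonneg (by positivity) (indicator_nonneg (fun y _ => h0 y) x)
      have hex : ∃ k : ℕ, |x - t| ≤ 2^k * b := ⟨N, by
        rw [abs_le]; constructor <;> linarith [hx.1, hx.2, ht.1, ht.2]⟩
      classical
      set k := Nat.find hex with hk
      have hk1 : |x - t| ≤ 2^k * b := Nat.find_spec hex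
      have hkN : k ≤ N := Nat.find_min' hex (by
        rw [abs_le]; constructor <;> linarith [hx.1, hx.2, ht.1, ht.2])
      refine le_trans ?_ (Finset.single_le_sum hterm (Finset.mem_range.2 (Nat.lt_succ_of_le hkN)))
      rw [indicator_of_mem (by rw [Metric.mem_closedBall, Real.dist_eq]; exact hk1), mul_comm]
      refine mul_le_mul_of_nonneg_right ?_ (h0 x)
      have hmax : 2^k*b/2 ≤ max |x-t| b := by
        rcases Nat.eq_zero_or_pos k with h | h
        · rw [h]; refine le_max_of_le_right (by norm_num; linarith)
        · have h3 : ¬ |x - t| ≤ 2^(k-1) * b := Nat.find_min hex (by omega)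
          have : (2:ℝ)^k = 2^(k-1) * 2 := by rw [← pow_succ]; congr 1; omega
          rw [this]
          refine le_max_of_le_left (by linarith)
      have : b / (max |x - t| b) ^ 2 ≤ b / (2^k*b/2)^2 := by
        refine div_le_div_of_nonneg_left hb.le (by positivity) ?_
        exact pow_le_pow_left₀ (by positivity) hmax 2
      refine this.trans (le_of_eq ?_)
      rw [one_div, inv_pow, show (4:ℝ)^k = (2^k)^2 by rw [← pow_mul, mul_comm, pow_mul]; norm_num]
      field_simp
      norm_num
    have hmeas : IntegrableOn (fun x => φ x * (b / (max |x - t| b) ^ 2)) (Ioo (-1:ℝ) 1) := by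
      refine Integrable.mul_bdd (c := b / b^2) hφ ?_ ?_
      · refine Continuous.aestronglyMeasurable ?_
        refine continuous_const.div (by fun_prop) fun x => ?_
        have : 0 < max |x - t| b := lt_max_of_lt_right hb
        positivity
      · refine ae_of_all _ fun x => ?_
        rw [Real.norm_eq_abs, abs_of_nonneg (by positivity)]
        exact div_le_div_of_nonneg_left hb.le (by positivity)
          (pow_le_pow_left₀ hb.le (le_max_right _ _) 2)
    have h1 := setIntegral_mono_on hmeas (integrable_finsetSum _ fun k _ => hint k)
      measurableSet_Ioo hle
    refine h1.trans ?_
    rw [integral_finsetSum _ fun k _ => hint k]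
    have h2 : ∀ k : ℕ, ∫ x in Ioo (-1:ℝ) 1, (4 / b * (1/4)^k) *
        (Metric.closedBall t (2^k*b)).indicator φ x = 4 * (1/2:ℝ)^k * m (2^k * b) := by
      intro k
      rw [integral_const_mul, setIntegral_indicator Metric.isClosed_closedBall.measurableSet,
        inter_comm, hm]
      simp only
      rw [← mul_assoc]
      congr 1
      rw [one_div, one_div, inv_pow, inv_pow, show (4:ℝ)^k = (2^k)^2 by rw [← pow_mul, mul_comm, pow_mul]; norm_num]
      field_simp
    simp only [h2]
    refine Summable.sum_le_tsum _ (fun k _ => mul_nonneg (by positivity) (hm0 _ (by positivity))) ?_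
    refine Summable.of_nonneg_of_le (fun k => mul_nonneg (by positivity) (hm0 _ (by positivity)))
      (fun k => ?_) hsum
    exact mul_le_mul_of_nonneg_left (hC _ (by positivity)) (by positivity)

def LebPt (u : ℝ → ℂ) (t : ℝ) : Prop :=
  Tendsto (fun s : ℝ => s⁻¹ * ∫ x in Metric.closedBall t s ∩ Ioo (-1:ℝ) 1, ‖u x - u t‖)
      (𝓝[>] 0) (𝓝 0)

lemma ae_leb {u : ℝ → ℂ} (hu : IntegrableOn u (Ioo (-1:ℝ) 1)) :
    ∀ᵐ t : ℝ, t ∈ Ioo (-1:ℝ) 1 → LebPt u t := by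
  have h1 : Integrable ((Ioo (-1:ℝ) 1).indicator u) := hu.integrable_indicator measurableSet_Ioo
  have := IsUnifLocDoublingMeasure.ae_tendsto_average_norm_sub volume h1.locallyIntegrable 1
  filter_upwards [this] with t ht htI
  have h2 := ht (l := 𝓝[>] (0:ℝ)) (fun _ => t) (fun s => s) tendsto_id (by
    filter_upwards [self_mem_nhdsWithin] with s hs
    have : 0 < s := hs
    exact Metric.mem_closedBall_self (by linarith))
  unfold LebPt
  have h3 := h2.const_mul 2
  rw [mul_zero] at h3
  refine squeeze_zero' ?_ ?_ h3
  · filter_upwards [self_mem_nhdsWithin] with s hs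
    have : 0 < s := hs
    exact mul_nonneg (by positivity) (integral_nonneg fun x => norm_nonneg _)
  · filter_upwards [self_mem_nhdsWithin] with s hs
    have hs : 0 < s := hs
    rw [setAverage_eq, smul_eq_mul, Measure.real, Real.volume_closedBall,
      ENNReal.toReal_ofReal (by positivity), mul_inv, ← mul_assoc, ← mul_assoc]
    norm_num
    refine mul_le_mul_of_nonneg_left ?_ (by positivity)
    have h4 : ∫ x in Metric.closedBall t s ∩ Ioo (-1:ℝ) 1, ‖u x - u t‖ =
      ∫ x in Metric.closedBall t s ∩ Ioo (-1:ℝ) 1, ‖(Ioo (-1:ℝ) 1).indicator u x - (Ioo (-1:ℝ) 1).indicator u t‖ := by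
      refine setIntegral_congr_fun (Metric.isClosed_closedBall.measurableSet.inter measurableSet_Ioo) fun x hx => ?_
      rw [indicator_of_mem hx.2, indicator_of_mem htI]
    rw [h4]
    refine setIntegral_mono_set ?_ (ae_of_all _ fun x => norm_nonneg _) inter_subset_left.eventuallyLE
    refine Integrable.norm ?_
    exact h1.integrableOn.sub (integrableOn_const (by
      rw [Real.volume_closedBall]; exact ENNReal.ofReal_ne_top))


lemma pvlog1 {t ε : ℝ} (he : 0 < ε) (h1 : ε < 1 - t) (h2 : ε < 1 + t) :
    ∫ x in {x : ℝ | x ∈ Set.Ioo (-1 : ℝ) 1 ∧ ε ≤ |x - t|}, 1 / ((x : ℂ) - (t : ℂ)) =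
      ((Real.log (1 - t) - Real.log (1 + t) : ℝ) : ℂ) := by
  have hset : {x : ℝ | x ∈ Set.Ioo (-1 : ℝ) 1 ∧ ε ≤ |x - t|} = Ioc (-1) (t - ε) ∪ Ico (t + ε) 1 := by
    ext x
    simp only [mem_ofPred_eq, mem_Ioo, mem_union, mem_Ioc, mem_Ico, le_abs]
    constructor
    · rintro ⟨⟨a, b⟩, c | c⟩
      · right; constructor <;> linarith
      · left; constructor <;> linarith
    · rintro (⟨a, b⟩ | ⟨a, b⟩)
      · exact ⟨⟨a, by linarith⟩, Or.inr (by linarith)⟩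
      · exact ⟨⟨by linarith, b⟩, Or.inl (by linarith)⟩
  have e1 : ∫ x in Ioc (-1) (t - ε), (x - t)⁻¹ = Real.log (ε / (1 + t)) := by
    rw [← intervalIntegral.integral_of_le (by linarith),
      intervalIntegral.integral_comp_sub_right (fun x => x⁻¹) t, integral_inv_of_neg (by linarith) (by linarith)]
    congr 1
    rw [show t - ε - t = -ε by ring, show -1 - t = -(1+t) by ring, neg_div_neg_eq]
  have e2 : ∫ x in Ico (t + ε) 1, (x - t)⁻¹ = Real.log ((1 - t) / ε) := by
    rw [integral_Ico_eq_integral_Ioc, ← intervalIntegral.integral_of_le (by linarith),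
      intervalIntegral.integral_comp_sub_right (fun x => x⁻¹) t, integral_inv_of_pos (by linarith) (by linarith)]
    congr 2
    ring
  have i1 : IntegrableOn (fun x => (x - t)⁻¹) (Ioc (-1) (t - ε)) := by
    refine (ContinuousOn.integrableOn_Icc ?_).mono_set Ioc_subset_Icc_self
    exact ContinuousOn.inv₀ (by fun_prop) fun x hx => by
      have := hx.2
      intro h; linarith
  have i2 : IntegrableOn (fun x => (x - t)⁻¹) (Ico (t + ε) 1) := by
    refine (ContinuousOn.integrableOn_Icc ?_).mono_set Ico_subset_Icc_self
    exact ContinuousOn.inv₀ (by fun_prop) fun x hx => by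
      have := hx.1
      intro h; linarith
  have : ∀ x : ℝ, 1 / ((x : ℂ) - (t : ℂ)) = (((x - t)⁻¹ : ℝ) : ℂ) := by
    intro x; push_cast; rw [one_div]
  simp only [this]
  rw [integral_complex_ofReal, hset, setIntegral_union _ measurableSet_Ico i1 i2, e1, e2]
  · congr 1
    rw [Real.log_div (by linarith) (by linarith), Real.log_div (by linarith) (by linarith)]
    ring
  · rw [Set.disjoint_left]; intro x hx hx'; have := hx.2; have := hx'.1; linarith

lemma pvlog2 {z : ℂ} (hz : z.im < 0) :
    ∫ x in Ioo (-1:ℝ) 1, 1 / ((x : ℂ) - z) = Complex.log (1 - z) - Complex.log (-1 - z) := by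
  rw [← integral_Ioc_eq_integral_Ioo, ← intervalIntegral.integral_of_le (by norm_num)]
  have := intervalIntegral.integral_eq_sub_of_hasDerivAt (a := -1) (b := 1)
    (f := fun x : ℝ => Complex.log ((x:ℂ) - z)) (f' := fun x : ℝ => 1 / ((x : ℂ) - z)) ?_ ?_
  · rw [this]; norm_num
  · intro x _
    have h1 : HasDerivAt (fun x : ℝ => (x : ℂ) - z) 1 x := by
      simpa using (Complex.ofRealCLM.hasDerivAt (x := x)).sub_const z
    refine h1.clog_real ?_
    right
    simp [hz.ne]
  · refine Continuous.intervalIntegrable ?_ _ _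
    refine continuous_const.div (by fun_prop) fun x h => ?_
    have := congrArg Complex.im h
    simp at this
    exact hz.ne this

lemma pvlog_lim {ι : Type*} {l : Filter ι} {z : ι → ℂ} {t : ℝ} (ht : t ∈ Ioo (-1:ℝ) 1)
    (hz : Tendsto z l (𝓝 (t:ℂ))) (him : ∀ᶠ r in l, (z r).im < 0) :
    Tendsto (fun r => ∫ x in Ioo (-1:ℝ) 1, 1 / ((x : ℂ) - z r)) l
      (𝓝 (((Real.log (1 - t) - Real.log (1 + t) : ℝ) : ℂ) - Real.pi * Complex.I)) := by
  have a1 : Tendsto (fun r => Complex.log (1 - z r)) l (𝓝 (Complex.log (1 - t))) := by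
    refine (ContinuousAt.tendsto ?_).comp (tendsto_const_nhds.sub hz)
    refine continuousAt_clog (Or.inl ?_)
    simp; exact ht.2
  have a2 : Tendsto (fun r => Complex.log (-1 - z r)) l (𝓝 (Real.log ‖(-1 - t:ℂ)‖ + Real.pi * Complex.I)) := by
    refine (Complex.tendsto_log_nhdsWithin_im_nonneg_of_re_neg_of_im_zero (z := -1 - t) ?_ ?_).comp ?_
    · simp; linarith [ht.1]
    · simp
    · refine tendsto_nhdsWithin_iff.2 ⟨tendsto_const_nhds.sub hz, ?_⟩
      filter_upwards [him] with r hr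
      simp; exact hr.le
  have a3 := a1.sub a2
  refine (Tendsto.congr' ?_ a3).trans (le_of_eq ?_)
  · filter_upwards [him] with r hr
    rw [pvlog2 hr]
  · congr 1
    have : ‖(-1 - t:ℂ)‖ = 1 + t := by
      rw [show (-1 - t:ℂ) = ((-(1+t):ℝ):ℂ) by push_cast; ring, Complex.norm_real, norm_neg,
        Real.norm_of_nonneg (by linarith [ht.1])]
    rw [this, show (1 - t:ℂ) = ((1-t:ℝ):ℂ) by push_cast; ring, ← Complex.ofReal_log (by linarith [ht.2])]
    push_cast; ring

def Ktr (t ε : ℝ) (x : ℝ) : ℂ := {x : ℝ | ε ≤ |x - t|}.indicator (fun x => 1 / ((x:ℂ) - t)) x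

lemma Ktr_meas (t ε : ℝ) : Measurable (Ktr t ε) := by
  refine Measurable.indicator (by fun_prop) ?_
  exact measurableSet_le measurable_const (by fun_prop)

lemma Ktr_bd {t ε : ℝ} (he : 0 < ε) (x : ℝ) : ‖Ktr t ε x‖ ≤ 1 / ε := by
  unfold Ktr
  by_cases h : ε ≤ |x - t|
  · rw [indicator_of_mem (by exact h), norm_div, norm_one, ← Complex.ofReal_sub, Complex.norm_real]
    exact one_div_le_one_div_of_le he h
  · rw [indicator_of_notMem (by exact h), norm_zero]; positivity

lemma tr_eq (u : ℝ → ℂ) (t ε : ℝ) :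
    ∫ x in {x : ℝ | x ∈ Set.Ioo (-1 : ℝ) 1 ∧ ε ≤ |x - t|}, u x / ((x : ℂ) - (t : ℂ)) =
    ∫ x in Ioo (-1:ℝ) 1, u x * Ktr t ε x := by
  have hm : MeasurableSet {x : ℝ | ε ≤ |x - t|} := measurableSet_le measurable_const (by fun_prop)
  have : {x : ℝ | x ∈ Set.Ioo (-1 : ℝ) 1 ∧ ε ≤ |x - t|} = Ioo (-1) 1 ∩ {x : ℝ | ε ≤ |x - t|} := rfl
  rw [this, ← setIntegral_indicator hm]
  congr 1
  ext x
  unfold Ktr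
  by_cases h : ε ≤ |x - t|
  · rw [indicator_of_mem (by exact h), indicator_of_mem (by exact h)]; ring
  · rw [indicator_of_notMem (by exact h), indicator_of_notMem (by exact h)]; ring

lemma cker_bd {z : ℂ} {ε : ℝ} (he : 0 < ε) (hz : z.im = -ε) (x : ℝ) : ε ≤ ‖(x:ℂ) - z‖ := by
  have := Complex.abs_im_le_norm ((x:ℂ) - z)
  simp only [Complex.sub_im, Complex.ofReal_im, hz] at this
  rw [show (0 - -ε) = ε by ring, abs_of_pos he] at this
  exact this

lemma B_bd {z : ℂ} {t ε : ℝ} (he : 0 < ε) (hz : z.im = -ε) (hr : |z.re - t| ≤ ε) (x : ℝ) :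
    ‖Ktr t ε x - 1 / ((x:ℂ) - z)‖ ≤ 6 * (ε / (max |x - t| ε) ^ 2) := by
  have h1 := cker_bd he hz x
  have hp : 0 < ‖(x:ℂ) - z‖ := he.trans_le h1
  have h2 : ‖(t:ℂ) - z‖ ≤ 2 * ε := by
    refine (Complex.norm_le_abs_re_add_abs_im _).trans ?_
    simp only [Complex.sub_re, Complex.sub_im, Complex.ofReal_re, Complex.ofReal_im, hz]
    rw [abs_sub_comm, show (0 - -ε) = ε by ring, abs_of_pos he]; linarith
  unfold Ktr
  by_cases h : ε ≤ |x - t|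
  · rw [indicator_of_mem (by exact h), max_eq_left h]
    have hq : 0 < |x - t| := he.trans_le h
    have hn : ‖(x:ℂ) - t‖ = |x - t| := by rw [← Complex.ofReal_sub, Complex.norm_real]; rfl
    have hne : (x:ℂ) - t ≠ 0 := norm_pos_iff.1 (by rw [hn]; exact hq)
    have hne2 : (x:ℂ) - z ≠ 0 := norm_pos_iff.1 hp
    have h3 : |x - t| ≤ 3 * ‖(x:ℂ) - z‖ := by
      rw [← hn, show (x:ℂ) - t = (x - z) - (t - z) by ring]
      refine (norm_sub_le _ _).trans (by linarith)
    have : 1 / ((x:ℂ) - t) - 1 / ((x:ℂ) - z) = (t - z) / ((x - t) * (x - z)) := by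
      field_simp; ring
    rw [this, norm_div, norm_mul, hn, mul_div_assoc', div_le_div_iff₀ (by positivity) (by positivity)]
    calc ‖(t:ℂ) - z‖ * |x-t|^2 = ‖(t:ℂ) - z‖ * |x-t| * |x - t| := by ring
      _ ≤ (2 * ε) * |x-t| * (3 * ‖(x:ℂ) - z‖) := by gcongr
      _ = _ := by ring
  · rw [indicator_of_notMem (by exact h), max_eq_right (le_of_not_ge h), zero_sub, norm_neg, norm_div,
      norm_one]
    have : 1 / ‖(x:ℂ) - z‖ ≤ 1 / ε := one_div_le_one_div_of_le he h1
    refine this.trans ?_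
    rw [show ε / ε ^ 2 = 1 / ε by field_simp]
    have : 0 < 1/ε := by positivity
    linarith

lemma pv {ι : Type*} {l : Filter ι} {z : ι → ℂ} {ε : ι → ℝ} {t : ℝ} {u : ℝ → ℂ}
    (hu : IntegrableOn u (Ioo (-1:ℝ) 1)) (ht : t ∈ Ioo (-1:ℝ) 1) (hL : LebPt u t)
    (hε : Tendsto ε l (𝓝[>] 0)) (hz : ∀ᶠ r in l, (z r).im = -ε r ∧ |(z r).re - t| ≤ ε r) :
    Tendsto (fun r => PV u t (ε r) - Cau u (z r)) l (𝓝 (Complex.I * u t)) := by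
  have hε0 : Tendsto ε l (𝓝 0) := hε.mono_right nhdsWithin_le_nhds
  have hpos : ∀ᶠ r in l, 0 < ε r := hε.eventually self_mem_nhdsWithin
  have hzt : Tendsto z l (𝓝 (t:ℂ)) := by
    rw [tendsto_iff_norm_sub_tendsto_zero]
    refine squeeze_zero' (Eventually.of_forall fun r => norm_nonneg _) ?_ (by simpa using hε0.const_mul 2)
    filter_upwards [hz, hpos] with r hr hp
    refine (Complex.norm_le_abs_re_add_abs_im _).trans ?_
    simp only [Complex.sub_re, Complex.sub_im, Complex.ofReal_re, Complex.ofReal_im, hr.1]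
    rw [show (-ε r - 0) = -ε r by ring, abs_neg, abs_of_pos hp]; linarith [hr.2]
  have huc : IntegrableOn (fun x => u x - u t) (Ioo (-1:ℝ) 1) :=
    hu.sub (integrableOn_const (by simp))
  have hA : Tendsto (fun r => ∫ x in Ioo (-1:ℝ) 1, (u x - u t) * (Ktr t (ε r) x - 1 / ((x:ℂ) - z r))) l (𝓝 0) := by
    have h1 := (lebker (φ := fun x => ‖u x - u t‖) (fun x => norm_nonneg _) huc.norm ht hL).comp hε
    have h2 := h1.const_mul 6
    rw [mul_zero] at h2
    refine squeeze_zero_norm' ?_ h2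
    filter_upwards [hz, hpos] with r hr hp
    simp only [Function.comp_apply]
    rw [← integral_const_mul]
    refine norm_integral_le_of_norm_le ?_ (ae_of_all _ fun x => ?_)
    · refine Integrable.const_mul ?_ _
      refine Integrable.mul_bdd (c := ε r / ε r ^2) huc.norm ?_ ?_
      · refine Continuous.aestronglyMeasurable ?_
        refine continuous_const.div (by fun_prop) fun x => ?_
        have : 0 < max |x - t| (ε r) := lt_max_of_lt_right hp
        positivity
      · refine ae_of_all _ fun x => ?_
        rw [Real.norm_eq_abs, abs_of_nonneg (by positivity)]
        exact div_le_div_of_nonneg_left hp.le (by positivity)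
          (pow_le_pow_left₀ hp.le (le_max_right _ _) 2)
    · rw [norm_mul]
      calc _ ≤ ‖u x - u t‖ * (6 * (ε r / (max |x - t| (ε r)) ^ 2)) :=
            mul_le_mul_of_nonneg_left (B_bd hp hr.1 hr.2 x) (norm_nonneg _)
        _ = _ := by ring
  have hlog := pvlog_lim ht hzt (by filter_upwards [hz, hpos] with r hr hp; linarith [hr.1])
  have hlim := (hA.add (((tendsto_const_nhds (x := ((Real.log (1 - t) - Real.log (1 + t) : ℝ) : ℂ))).sub hlog).const_mul
    (u t))).const_mul (Real.pi:ℂ)⁻¹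
  refine (Tendsto.congr' ?_ hlim).trans (le_of_eq ?_)
  · filter_upwards [hz, hpos, hε0.eventually (gt_mem_nhds (show 0 < 1 - t by linarith [ht.2])),
      hε0.eventually (gt_mem_nhds (show 0 < 1 + t by linarith [ht.1]))] with r hr hp h1 h2
    have hcm : AEStronglyMeasurable (fun x : ℝ => 1 / ((x:ℂ) - z r)) (volume.restrict (Ioo (-1:ℝ) 1)) :=
      (by fun_prop : Measurable (fun x : ℝ => 1 / ((x:ℂ) - z r))).aestronglyMeasurable
    have hcb : ∀ x : ℝ, ‖1 / ((x:ℂ) - z r)‖ ≤ 1 / ε r := fun x => by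
      rw [norm_div, norm_one]; exact one_div_le_one_div_of_le hp (cker_bd hp hr.1 x)
    have int1 : ∀ v : ℝ → ℂ, IntegrableOn v (Ioo (-1:ℝ) 1) →
      IntegrableOn (fun x => v x * (1 / ((x:ℂ) - z r))) (Ioo (-1:ℝ) 1) := fun v hv =>
        Integrable.mul_bdd (c := 1 / ε r) hv hcm (ae_of_all _ hcb)
    have int2 : ∀ v : ℝ → ℂ, IntegrableOn v (Ioo (-1:ℝ) 1) →
      IntegrableOn (fun x => v x * Ktr t (ε r) x) (Ioo (-1:ℝ) 1) := fun v hv =>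
        Integrable.mul_bdd (c := 1 / ε r) hv (Ktr_meas _ _).aestronglyMeasurable (ae_of_all _ (Ktr_bd hp))
    unfold PV Cau
    rw [← mul_sub, ← pvlog1 hp h1 h2, tr_eq, tr_eq]
    congr 1
    have hc : IntegrableOn (fun _ : ℝ => u t) (Ioo (-1:ℝ) 1) := integrableOn_const (by simp)
    have hc1 : IntegrableOn (fun _ : ℝ => (1:ℂ)) (Ioo (-1:ℝ) 1) := integrableOn_const (by simp)
    have e0 : ∀ x : ℝ, u x / ((x:ℂ) - z r) = u x * (1 / ((x:ℂ) - z r)) := fun x => by ring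
    have e1 : ∫ x in Ioo (-1:ℝ) 1, (u x - u t) * (Ktr t (ε r) x - 1 / ((x:ℂ) - z r)) =
      (∫ x in Ioo (-1:ℝ) 1, (u x - u t) * Ktr t (ε r) x) - ∫ x in Ioo (-1:ℝ) 1, (u x - u t) * (1 / ((x:ℂ) - z r)) := by
      rw [← integral_sub (int2 _ huc) (int1 _ huc)]
      congr 1; ext x; ring
    have e2 : ∫ x in Ioo (-1:ℝ) 1, (u x - u t) * Ktr t (ε r) x =
      (∫ x in Ioo (-1:ℝ) 1, u x * Ktr t (ε r) x) - u t * ∫ x in Ioo (-1:ℝ) 1, 1 * Ktr t (ε r) x := by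
      rw [← integral_const_mul, ← integral_sub (int2 _ hu) ((int2 _ hc1).const_mul _)]
      congr 1; ext x; ring
    have e3 : ∫ x in Ioo (-1:ℝ) 1, (u x - u t) * (1 / ((x:ℂ) - z r)) =
      (∫ x in Ioo (-1:ℝ) 1, u x * (1 / ((x:ℂ) - z r))) - u t * ∫ x in Ioo (-1:ℝ) 1, 1 * (1 / ((x:ℂ) - z r)) := by
      rw [← integral_const_mul, ← integral_sub (int1 _ hu) ((int1 _ hc1).const_mul _)]
      congr 1; ext x; ring
    simp only [e0]
    rw [e1, e2, e3]
    simp only [one_mul]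
    ring
  · congr 1
    have : (Real.pi:ℂ) ≠ 0 := by exact_mod_cast Real.pi_ne_zero
    field_simp
    ring


def zp (θ r : ℝ) : ℂ := (1 + ((r:ℂ) * circleMap 0 1 θ) ^ 2) / (2 * ((r:ℂ) * circleMap 0 1 θ))

def Wp (θ r : ℝ) : ℂ := (1 - ((r:ℂ) * circleMap 0 1 θ) ^ 2) / (2 * ((r:ℂ) * circleMap 0 1 θ))

def εp (θ r : ℝ) : ℝ := (1 / r - r) / 2 * Real.sin θ

lemma cm_eq (θ : ℝ) : circleMap 0 1 θ = Complex.cos θ + Complex.sin θ * Complex.I := by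
  simp [circleMap, Complex.exp_mul_I]

lemma cm_inv (θ : ℝ) : (circleMap 0 1 θ)⁻¹ = Complex.cos θ - Complex.sin θ * Complex.I := by
  refine inv_eq_of_mul_eq_one_right ?_
  rw [cm_eq]
  linear_combination Complex.cos_sq_add_sin_sq (θ:ℂ) - (Complex.sin θ)^2 * Complex.I_sq

lemma cm_ne (θ : ℝ) : circleMap 0 1 θ ≠ 0 := circleMap_ne_center one_ne_zero

lemma zp_eq {θ r : ℝ} (hr : r ≠ 0) : zp θ r =
    (((1/r + r)/2 * Real.cos θ : ℝ) : ℂ) - ((εp θ r : ℝ) : ℂ) * Complex.I := by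
  have hr' : (r:ℂ) ≠ 0 := by exact_mod_cast hr
  have h : zp θ r = ((1/(r:ℂ)) * (circleMap 0 1 θ)⁻¹ + r * circleMap 0 1 θ) / 2 := by
    unfold zp; have := cm_ne θ; field_simp
  rw [h, cm_inv, cm_eq, εp]; push_cast; ring

lemma Wp_eq {θ r : ℝ} (hr : r ≠ 0) : Wp θ r =
    (((1/r - r)/2 * Real.cos θ : ℝ) : ℂ) - (((1/r+r)/2 * Real.sin θ : ℝ) : ℂ) * Complex.I := by
  have hr' : (r:ℂ) ≠ 0 := by exact_mod_cast hr
  have h : Wp θ r = ((1/(r:ℂ)) * (circleMap 0 1 θ)⁻¹ - r * circleMap 0 1 θ) / 2 := by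
    unfold Wp; have := cm_ne θ; field_simp
  rw [h, cm_inv, cm_eq]; push_cast; ring

lemma ev_Ioo : ∀ᶠ r : ℝ in 𝓝[<] 1, r ∈ Ioo (0:ℝ) 1 := Ioo_mem_nhdsLT zero_lt_one

lemma εp_tend {θ : ℝ} (hθ : θ ∈ Ioo 0 Real.pi) : Tendsto (εp θ) (𝓝[<] 1) (𝓝[>] 0) := by
  have hs := Real.sin_pos_of_mem_Ioo hθ
  refine tendsto_nhdsWithin_iff.2 ⟨?_, ?_⟩
  · have : ContinuousAt (εp θ) 1 := by
      unfold εp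
      have : ContinuousAt (fun r : ℝ => 1 / r) 1 := continuousAt_const.div continuousAt_id one_ne_zero
      fun_prop
    have h := this.tendsto
    simp only [εp] at h
    norm_num at h
    exact h.mono_left nhdsWithin_le_nhds
  · filter_upwards [ev_Ioo] with r hr
    have : 1 < 1 / r := by rw [lt_div_iff₀ hr.1]; linarith [hr.2]
    have : 0 < (1/r - r)/2 := by linarith [hr.2]
    exact mul_pos this hs

lemma zp_ev {θ : ℝ} (hθ : θ ∈ Ioo 0 Real.pi) :
    ∀ᶠ r in 𝓝[<] (1:ℝ), (zp θ r).im = - εp θ r ∧ |(zp θ r).re - Real.cos θ| ≤ εp θ r := by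
  have hs := Real.sin_pos_of_mem_Ioo hθ
  have : ∀ᶠ r : ℝ in 𝓝[<] 1, r ∈ Ioo (1 - Real.sin θ) 1 := Ioo_mem_nhdsLT (by linarith)
  filter_upwards [ev_Ioo, this] with r hr hr2
  rw [zp_eq hr.1.ne']
  constructor
  · simp [-Complex.ofReal_div, -Complex.ofReal_mul]
  · simp only [Complex.sub_re, Complex.ofReal_re, Complex.mul_re, Complex.I_re, Complex.ofReal_im,
      Complex.I_im]
    have e : ((1/r + r)/2 * Real.cos θ) - (εp θ r * 0 - 0 * 1) - Real.cos θ = (1-r)/(2*r) * ((1-r) * Real.cos θ) := by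
      have := hr.1.ne'
      field_simp; ring
    have e2 : εp θ r = (1-r)/(2*r) * ((1+r) * Real.sin θ) := by
      have := hr.1.ne'
      unfold εp
      field_simp; ring
    have hp : 0 ≤ (1-r)/(2*r) := div_nonneg (by linarith [hr.2]) (by linarith [hr.1])
    rw [e, e2, abs_mul, abs_of_nonneg hp]
    refine mul_le_mul_of_nonneg_left ?_ hp
    rw [abs_mul, abs_of_nonneg (by linarith [hr.2])]
    have := Real.abs_cos_le_one θ
    nlinarith [hr.1, hr.2, hr2.1]

lemma cos_mem {θ : ℝ} (hθ : θ ∈ Ioo 0 Real.pi) : Real.cos θ ∈ Ioo (-1:ℝ) 1 := by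
  have hs := Real.sin_pos_of_mem_Ioo hθ
  have := Real.sin_sq_add_cos_sq θ
  constructor <;> nlinarith

lemma pvpath {θ : ℝ} (hθ : θ ∈ Ioo 0 Real.pi) {u : ℝ → ℂ} (hu : IntegrableOn u (Ioo (-1:ℝ) 1))
    (hL : LebPt u (Real.cos θ)) :
    Tendsto (fun r => PV u (Real.cos θ) (εp θ r) - Cau u (zp θ r)) (𝓝[<] 1)
      (𝓝 (Complex.I * u (Real.cos θ))) :=
  pv hu (cos_mem hθ) hL (εp_tend hθ) (zp_ev hθ)

lemma pvback {θ : ℝ} (hθ : θ ∈ Ioo 0 Real.pi) {F : ℝ → ℂ} {L : ℂ}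
    (h : Tendsto (fun r => F (εp θ r)) (𝓝[<] 1) (𝓝 L)) :
    Tendsto F (𝓝[>] 0) (𝓝 L) := by
  have hs := Real.sin_pos_of_mem_Ioo hθ
  set ρ : ℝ → ℝ := fun e => Real.sqrt (1 + (e / Real.sin θ)^2) - e / Real.sin θ with hρ
  have h1 : Tendsto ρ (𝓝[>] 0) (𝓝[<] 1) := by
    refine tendsto_nhdsWithin_iff.2 ⟨?_, ?_⟩
    · have : Continuous ρ := by fun_prop
      have h := this.tendsto 0
      simp only [hρ] at h
      norm_num at h
      exact h.mono_left nhdsWithin_le_nhds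
    · filter_upwards [self_mem_nhdsWithin] with e he
      have he : 0 < e := he
      have : 0 < e / Real.sin θ := by positivity
      have : Real.sqrt (1 + (e / Real.sin θ)^2) < 1 + e / Real.sin θ := by
        rw [Real.sqrt_lt' (by positivity)]; nlinarith
      simp only [hρ, mem_Iio]; linarith
  refine (h.comp h1).congr' ?_
  filter_upwards [self_mem_nhdsWithin] with e he
  have he : 0 < e := he
  simp only [Function.comp_apply]
  congr 1
  have hsp : 0 < e / Real.sin θ := by positivity
  set s := e / Real.sin θ with hsd
  have hq : Real.sqrt (1 + s^2) ^ 2 = 1 + s^2 := Real.sq_sqrt (by positivity)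
  have hprod : (Real.sqrt (1 + s^2) - s) * (Real.sqrt (1 + s^2) + s) = 1 := by nlinarith
  have hne : Real.sqrt (1 + s^2) - s ≠ 0 := left_ne_zero_of_mul_eq_one hprod
  unfold εp
  have : 1 / ρ e = Real.sqrt (1 + s^2) + s := by
    rw [div_eq_iff hne, mul_comm]; exact hprod.symm
  rw [this]
  simp only [hρ]
  rw [← hsd, show (Real.sqrt (1 + s^2) + s - (Real.sqrt (1 + s^2) - s)) / 2 = s by ring, hsd]
  field_simp

lemma pv_of_cau {θ : ℝ} (hθ : θ ∈ Ioo 0 Real.pi) {u : ℝ → ℂ} (hu : IntegrableOn u (Ioo (-1:ℝ) 1))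
    (hL : LebPt u (Real.cos θ)) {L : ℂ} (h : Tendsto (fun r => Cau u (zp θ r)) (𝓝[<] 1) (𝓝 L)) :
    Tendsto (PV u (Real.cos θ)) (𝓝[>] 0) (𝓝 (L + Complex.I * u (Real.cos θ))) := by
  refine pvback hθ ?_
  simpa using h.add (pvpath hθ hu hL)

lemma cau_of_pv {θ : ℝ} (hθ : θ ∈ Ioo 0 Real.pi) {u : ℝ → ℂ} (hu : IntegrableOn u (Ioo (-1:ℝ) 1))
    (hL : LebPt u (Real.cos θ)) {L : ℂ} (h : Tendsto (PV u (Real.cos θ)) (𝓝[>] 0) (𝓝 L)) :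
    Tendsto (fun r => Cau u (zp θ r)) (𝓝[<] 1) (𝓝 (L - Complex.I * u (Real.cos θ))) := by
  simpa using (h.comp (εp_tend hθ)).sub (pvpath hθ hu hL)

lemma Wp_tend (θ : ℝ) : Tendsto (Wp θ) (𝓝[<] 1) (𝓝 (-(Real.sin θ) * Complex.I)) := by
  have : ContinuousAt (Wp θ) 1 := by
    unfold Wp
    refine ContinuousAt.div (by fun_prop) (by fun_prop) ?_
    simp [cm_ne]
  have h := this.tendsto
  rw [Wp_eq one_ne_zero] at h
  norm_num at h
  rw [Complex.ofReal_sin, neg_mul]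
  exact h.mono_left nhdsWithin_le_nhds

lemma nrm_cm (r θ : ℝ) : ‖(r:ℂ) * circleMap 0 1 θ‖ = |r| := by
  simp [norm_circleMap_zero]

lemma Phi_eq' {u : ℝ → ℂ} {θ r : ℝ} (hr : r ∈ Ioo (0:ℝ) 1) :
    Phi u (r * circleMap 0 1 θ) = - Wp θ r * Cau u (zp θ r) := by
  unfold Wp zp
  refine Phi_eq _ ?_ ?_
  · rw [nrm_cm, abs_of_pos hr.1]; exact hr.2
  · have : (r:ℂ) ≠ 0 := by exact_mod_cast hr.1.ne'
    exact mul_ne_zero this (cm_ne θ)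

lemma lift_lim {F : ℝ → ℂ} (hF : ContinuousOn F (Ioo (0:ℝ) 1)) {c : ℂ} (hc : c ≠ 0)
    (h : Tendsto (fun r => Complex.exp (F r)) (𝓝[<] 1) (𝓝 c)) :
    ∃ L, Tendsto F (𝓝[<] 1) (𝓝 L) := by
  set a := Complex.log c
  have hea : Complex.exp a = c := Complex.exp_log hc
  set E : ℝ → ℂ := fun r => Complex.exp (F r - a) with hE
  have h1 : Tendsto E (𝓝[<] 1) (𝓝 1) := by
    have := h.div_const c
    rw [div_self hc] at this
    refine this.congr fun r => ?_
    rw [hE]; simp only; rw [Complex.exp_sub, hea]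
  have hsl : ∀ᶠ r in 𝓝[<] (1:ℝ), E r ∈ Complex.slitPlane :=
    h1.eventually (Complex.isOpen_slitPlane.mem_nhds Complex.one_mem_slitPlane)
  obtain ⟨b, hb, hb2⟩ := (mem_nhdsLT_iff_exists_Ioo_subset).1 (hsl.and ev_Ioo)
  have hb : b < 1 := hb
  set d : ℝ → ℝ := fun r => (F r - a - Complex.log (E r)).im with hd
  have hdc : ContinuousOn d (Ioo b 1) := by
    have c1 : ContinuousOn F (Ioo b 1) := hF.mono fun r hr => (hb2 hr).2
    have c2 : ContinuousOn E (Ioo b 1) := by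
      exact Complex.continuous_exp.comp_continuousOn (c1.sub continuousOn_const)
    have c3 : ContinuousOn (fun r => Complex.log (E r)) (Ioo b 1) := c2.clog fun r hr => (hb2 hr).1
    exact Complex.continuous_im.comp_continuousOn ((c1.sub continuousOn_const).sub c3)
  have hn : ∀ r, ∃ n : ℤ, F r - a = Complex.log (E r) + n * (2 * Real.pi * Complex.I) := by
    intro r
    refine Complex.exp_eq_exp_iff_exists_int.1 ?_
    rw [Complex.exp_log (Complex.exp_ne_zero _)]
  have hdn : ∀ r (n : ℤ), F r - a = Complex.log (E r) + n * (2 * Real.pi * Complex.I) → d r = n * (2 * Real.pi) := by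
    intro r n h
    simp only [hd]; rw [h]
    simp
  set r0 := (b+1)/2 with hr0
  have hr0m : r0 ∈ Ioo b 1 := by constructor <;> linarith
  obtain ⟨n0, hn0⟩ := hn r0
  have hconst : ∀ r ∈ Ioo b 1, d r = d r0 := by
    intro r hr
    obtain ⟨n, hn⟩ := hn r
    rw [hdn r n hn, hdn r0 n0 hn0]
    by_contra hne
    have hnn : n ≠ n0 := fun h => hne (by rw [h])
    have hsub := isPreconnected_Ioo.intermediate_value hr hr0m hdc
    have hsub2 := isPreconnected_Ioo.intermediate_value hr0m hr hdc
    rw [hdn r n hn, hdn r0 n0 hn0] at hsub hsub2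
    have hpi := Real.pi_pos
    have key : ∀ m : ℤ, ¬ ∃ y ∈ Ioo b 1, d y = (m + 1/2) * (2 * Real.pi) := by
      rintro m ⟨y, hy, hy2⟩
      obtain ⟨k, hk⟩ := ‹∀ r, ∃ n : ℤ, _› y
      rw [hdn y k hk] at hy2
      have h3 : (k:ℝ) = m + 1/2 := mul_right_cancel₀ (by positivity) hy2
      have : (2 * k : ℤ) = 2 * m + 1 := by
        have : (2 * k : ℝ) = 2 * m + 1 := by linarith
        exact_mod_cast this
      omega
    rcases lt_or_gt_of_ne hnn with hlt | hlt
    · have h1 : (n:ℝ) + 1 ≤ n0 := by exact_mod_cast hlt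
      refine key n (hsub ⟨?_, ?_⟩)
      · exact mul_le_mul_of_nonneg_right (by linarith) (by positivity)
      · exact mul_le_mul_of_nonneg_right (by linarith) (by positivity)
    · have h1 : (n0:ℝ) + 1 ≤ n := by exact_mod_cast hlt
      refine key n0 (hsub2 ⟨?_, ?_⟩)
      · exact mul_le_mul_of_nonneg_right (by linarith) (by positivity)
      · exact mul_le_mul_of_nonneg_right (by linarith) (by positivity)
  have hlog : Tendsto (fun r => Complex.log (E r)) (𝓝[<] 1) (𝓝 0) := by
    have := h1.clog Complex.one_mem_slitPlane
    rwa [Complex.log_one] at this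
  refine ⟨a + 0 + d r0 * Complex.I, ((tendsto_const_nhds.add hlog).add tendsto_const_nhds).congr' ?_⟩
  filter_upwards [Ioo_mem_nhdsLT hb] with r hr
  obtain ⟨n, hn⟩ := hn r
  rw [← hconst r hr, hdn r n hn]
  push_cast
  linear_combination -hn


lemma ae_cos {P : ℝ → Prop} (h : ∀ᵐ t : ℝ, t ∈ Ioo (-1:ℝ) 1 → P t) :
    ∀ᵐ θ : ℝ, θ ∈ Ioo 0 Real.pi → P (Real.cos θ) := by
  rw [ae_iff] at h ⊢
  have hd : DifferentiableOn ℝ Real.arccos {t : ℝ | ¬ (t ∈ Ioo (-1:ℝ) 1 → P t)} := by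
    intro t ht
    have ht : t ∈ Ioo (-1:ℝ) 1 := by
      by_contra h; exact ht fun h' => absurd h' h
    exact (Real.differentiableAt_arccos.2 ⟨ht.1.ne', ht.2.ne⟩).differentiableWithinAt
  refine measure_mono_null ?_ (addHaar_image_eq_zero_of_differentiableOn_of_addHaar_eq_zero volume hd h)
  intro θ hθ
  simp only [mem_ofPred_eq, Classical.not_imp] at hθ
  refine ⟨Real.cos θ, ?_, Real.arccos_cos hθ.1.1.le hθ.1.2.le⟩
  simp only [mem_ofPred_eq, Classical.not_imp]
  exact ⟨cos_mem hθ.1, hθ.2⟩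

lemma ae_of_cos {P : ℝ → Prop} (h : ∀ᵐ θ : ℝ, θ ∈ Ioo 0 Real.pi → P (Real.cos θ)) :
    ∀ᵐ t : ℝ, t ∈ Ioo (-1:ℝ) 1 → P t := by
  rw [ae_iff] at h ⊢
  have hd : DifferentiableOn ℝ Real.cos {θ : ℝ | ¬ (θ ∈ Ioo 0 Real.pi → P (Real.cos θ))} :=
    Real.differentiable_cos.differentiableOn
  refine measure_mono_null ?_ (addHaar_image_eq_zero_of_differentiableOn_of_addHaar_eq_zero volume hd h)
  intro t ht
  simp only [mem_ofPred_eq, Classical.not_imp] at ht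
  have hc : Real.cos (Real.arccos t) = t := Real.cos_arccos ht.1.1.le ht.1.2.le
  refine ⟨Real.arccos t, ?_, hc⟩
  simp only [mem_ofPred_eq, Classical.not_imp]
  refine ⟨⟨Real.arccos_pos.2 ht.1.2, ?_⟩, by rw [hc]; exact ht.2⟩
  refine lt_of_le_of_ne (Real.arccos_le_pi t) fun h => ?_
  have := Real.arccos_eq_pi.1 h
  linarith [ht.1.1]

lemma eps_cau {θ : ℝ} (hθ : θ ∈ Ioo 0 Real.pi) {u : ℝ → ℂ} (hu : IntegrableOn u (Ioo (-1:ℝ) 1)) :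
    Tendsto (fun r => (εp θ r : ℂ) * Cau u (zp θ r)) (𝓝[<] 1) (𝓝 0) := by
  have hε0 : Tendsto (εp θ) (𝓝[<] 1) (𝓝 0) := (εp_tend hθ).mono_right nhdsWithin_le_nhds
  have hpos : ∀ᶠ r in 𝓝[<] 1, 0 < εp θ r := (εp_tend hθ).eventually self_mem_nhdsWithin
  have hzt : Tendsto (zp θ) (𝓝[<] 1) (𝓝 ((Real.cos θ:ℝ):ℂ)) := by
    rw [tendsto_iff_norm_sub_tendsto_zero]
    refine squeeze_zero' (Eventually.of_forall fun r => norm_nonneg _) ?_ (by simpa using hε0.const_mul 2)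
    filter_upwards [zp_ev hθ, hpos] with r hr hp
    refine (Complex.norm_le_abs_re_add_abs_im _).trans ?_
    simp only [Complex.sub_re, Complex.sub_im, Complex.ofReal_re, Complex.ofReal_im, hr.1]
    rw [show (-εp θ r - 0) = -εp θ r by ring, abs_neg, abs_of_pos hp]; linarith [hr.2]
  have key : Tendsto (fun r => ∫ x in Ioo (-1:ℝ) 1, (εp θ r : ℂ) * (u x / ((x:ℂ) - zp θ r))) (𝓝[<] 1)
      (𝓝 (∫ x in Ioo (-1:ℝ) 1, (0:ℂ))) := by
    refine tendsto_integral_filter_of_dominated_convergence (fun x => ‖u x‖) ?_ ?_ hu.norm ?_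
    · refine Eventually.of_forall fun r => ?_
      have : Measurable (fun x : ℝ => ((x:ℂ) - zp θ r)⁻¹) := by fun_prop
      simp only [div_eq_mul_inv]
      exact (hu.1.mul this.aestronglyMeasurable).const_mul _
    · filter_upwards [zp_ev hθ, hpos] with r hr hp
      refine ae_of_all _ fun x => ?_
      have h1 := cker_bd hp hr.1 x
      rw [norm_mul, norm_div, Complex.norm_real, Real.norm_of_nonneg hp.le, mul_div_assoc',
        div_le_iff₀ (hp.trans_le h1), mul_comm]
      exact mul_le_mul_of_nonneg_left h1 (norm_nonneg _)
    · have : ∀ᵐ x : ℝ ∂(volume.restrict (Ioo (-1:ℝ) 1)), x ≠ Real.cos θ :=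
        Measure.ae_ne _ _
      filter_upwards [this] with x hx
      have hne : (x:ℂ) - (Real.cos θ:ℝ) ≠ 0 := by
        rw [sub_ne_zero]; exact_mod_cast hx
      have h1 : Tendsto (fun r => u x / ((x:ℂ) - zp θ r)) (𝓝[<] 1) (𝓝 (u x / ((x:ℂ) - (Real.cos θ:ℝ)))) :=
        tendsto_const_nhds.div (tendsto_const_nhds.sub hzt) hne
      have h2 : Tendsto (fun r => (εp θ r : ℂ)) (𝓝[<] 1) (𝓝 ((0:ℝ):ℂ)) :=
        (Complex.continuous_ofReal.tendsto 0).comp hε0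
      have := h2.mul h1
      simpa using this
  have := key.const_mul (Real.pi:ℂ)⁻¹
  simp only [integral_zero, mul_zero] at this
  refine this.congr fun r => ?_
  rw [integral_const_mul]; unfold Cau; ring

lemma PV_im (p : ℝ → ℝ) (t ε : ℝ) : (PV (fun x => (p x:ℂ)) t ε).im = 0 := by
  unfold PV
  have : ∀ x : ℝ, (p x:ℂ) / ((x:ℂ) - t) = ((p x / (x - t) : ℝ) : ℂ) := by intro x; push_cast; rfl
  simp only [this]
  rw [integral_complex_ofReal, ← Complex.ofReal_inv, ← Complex.ofReal_mul, Complex.ofReal_im]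

lemma exist_pos {p : ℝ → ℝ} (hp : IntegrableOn (fun x => (p x:ℂ)) (Ioo (-1:ℝ) 1)) (h0 : ∀ x, 0 ≤ p x) :
    ∀ᵐ θ : ℝ, θ ∈ Ioo 0 Real.pi → ∃ l, Tendsto (PV (fun x => (p x:ℂ)) (Real.cos θ)) (𝓝[>] 0) (𝓝 l) := by
  have hd := Phi_diff hp
  have hf := fatou (G := fun ζ => Complex.exp (- Phi (fun x => (p x:ℂ)) ζ)) (by
    exact Complex.differentiable_exp.comp_differentiableOn hd.neg) (by
    intro ζ hζ
    rw [Complex.norm_exp, Complex.neg_re, Real.exp_le_one_iff]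
    have := Phi_re hp h0 ζ (by simpa using hζ)
    linarith)
  filter_upwards [hf, ae_cos (ae_leb hp)] with θ hθf hL hθ
  have hL := hL hθ
  obtain ⟨c, hc⟩ := hθf
  set u : ℝ → ℂ := fun x => (p x:ℂ) with hu
  set t := Real.cos θ with ht
  have hs := Real.sin_pos_of_mem_Ioo hθ
  have him : Tendsto (fun r => (Cau u (zp θ r)).im) (𝓝[<] 1) (𝓝 (- p t)) := by
    have := (Complex.continuous_im.tendsto _).comp (pvpath hθ hp hL)
    have h2 := this.neg
    refine (Tendsto.congr ?_ h2).trans (le_of_eq ?_)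
    · intro r
      simp only [Function.comp_apply, Complex.sub_im]
      rw [hu, PV_im]; ring
    · congr 1; simp [ht, hu]
  have hec : Tendsto (fun r => εp θ r * (Cau u (zp θ r)).re) (𝓝[<] 1) (𝓝 0) := by
    have := (Complex.continuous_re.tendsto _).comp (eps_cau hθ hp)
    simp only [Complex.zero_re] at this
    refine this.congr fun r => ?_
    simp only [Function.comp_apply, Complex.re_ofReal_mul]
  have hW := (Complex.continuous_im.tendsto _).comp (Wp_tend θ)
  have hre : Tendsto (fun r : ℝ => (Phi u (r * circleMap 0 1 θ)).re) (𝓝[<] 1)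
      (𝓝 (Real.sin θ * p t)) := by
    have h1 := (hec.const_mul (- Real.cos θ / Real.sin θ)).add (hW.mul him)
    refine (Tendsto.congr' ?_ h1).trans (le_of_eq ?_)
    · filter_upwards [ev_Ioo] with r hr
      rw [Phi_eq' hr, Complex.mul_re, Function.comp_apply]
      have hwre : (Wp θ r).re = εp θ r * Real.cos θ / Real.sin θ := by
        rw [Wp_eq hr.1.ne']
        unfold εp
        simp only [Complex.sub_re, Complex.ofReal_re, Complex.mul_re, Complex.I_re, Complex.ofReal_im,
          Complex.I_im]
        field_simp
        ring
      rw [Complex.neg_re, Complex.neg_im, hwre]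
      ring
    · congr 1
      simp [-Complex.ofReal_sin]
  have hcne : c ≠ 0 := by
    have h1 := hc.norm
    have h2 : Tendsto (fun r : ℝ => Real.exp (-(Phi u (r * circleMap 0 1 θ)).re)) (𝓝[<] 1)
      (𝓝 (Real.exp (-(Real.sin θ * p t)))) := (Real.continuous_exp.tendsto _).comp hre.neg
    have h3 : ‖c‖ = Real.exp (-(Real.sin θ * p t)) := by
      refine tendsto_nhds_unique h1 (h2.congr fun r => ?_)
      rw [Complex.norm_exp, Complex.neg_re]
    intro h
    rw [h, norm_zero] at h3
    exact (Real.exp_pos _).ne h3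
  have hcont : ContinuousOn (fun r : ℝ => - Phi u (r * circleMap 0 1 θ)) (Ioo (0:ℝ) 1) := by
    refine ContinuousOn.neg ?_
    refine hd.continuousOn.comp (t := Metric.ball 0 1) (f := fun r : ℝ => (r:ℂ) * circleMap 0 1 θ) (by fun_prop) ?_
    intro r hr
    rw [mem_ball_zero_iff, nrm_cm, abs_of_pos hr.1]; exact hr.2
  obtain ⟨L, hLim⟩ := lift_lim hcont hcne hc
  have hWne : -(Real.sin θ:ℂ) * Complex.I ≠ 0 := by
    have : (Real.sin θ:ℂ) ≠ 0 := by exact_mod_cast hs.ne'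
    exact mul_ne_zero (neg_ne_zero.2 this) Complex.I_ne_zero
  have hC : Tendsto (fun r => Cau u (zp θ r)) (𝓝[<] 1) (𝓝 (L / (-(Real.sin θ:ℂ) * Complex.I))) := by
    refine (hLim.div (Wp_tend θ) hWne).congr' ?_
    filter_upwards [ev_Ioo, (Wp_tend θ).eventually_ne hWne] with r hr hr2
    simp only [Pi.div_apply]
    rw [Phi_eq' hr]
    field_simp
  exact ⟨_, pv_of_cau hθ hp hL hC⟩

def prt (u : ℝ → ℂ) (j : ℕ) (x : ℝ) : ℝ := max ((u x * (-Complex.I) ^ j).re) 0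

lemma prt_nn (u : ℝ → ℂ) (j : ℕ) (x : ℝ) : 0 ≤ prt u j x := le_max_right _ _

lemma prt_sum (u : ℝ → ℂ) (x : ℝ) : u x = ∑ j ∈ Finset.range 4, Complex.I ^ j * (prt u j x : ℂ) := by
  have a1 := max_zero_sub_max_neg_zero_eq_self (u x).re
  have a2 := max_zero_sub_max_neg_zero_eq_self (u x).im
  have i3 : Complex.I ^ 3 = - Complex.I := by rw [pow_succ, Complex.I_sq]; ring
  have j2 : (-Complex.I) ^ 2 = -1 := by rw [neg_sq, Complex.I_sq]
  have j3 : (-Complex.I) ^ 3 = Complex.I := by rw [pow_succ, j2]; ring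
  simp only [Finset.sum_range_succ, Finset.sum_range_zero, prt, pow_zero, pow_one, j2, j3, i3, Complex.I_sq]
  apply Complex.ext
  · simp; linarith
  · simp; linarith

lemma prt_int {u : ℝ → ℂ} (hu : IntegrableOn u (Ioo (-1:ℝ) 1)) (j : ℕ) :
    IntegrableOn (fun x => (prt u j x : ℂ)) (Ioo (-1:ℝ) 1) := by
  have h1 : IntegrableOn (fun x => (u x * (-Complex.I) ^ j).re) (Ioo (-1:ℝ) 1) :=
    (hu.mul_const _).re
  exact h1.pos_part.ofReal

lemma exist_pv {u : ℝ → ℂ} (hu : IntegrableOn u (Ioo (-1:ℝ) 1)) :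
    ∀ᵐ θ : ℝ, θ ∈ Ioo 0 Real.pi → Tendsto (PV u (Real.cos θ)) (𝓝[>] 0) (𝓝 (FHT u (Real.cos θ))) := by
  have : ∀ᵐ θ : ℝ, ∀ j : ℕ, θ ∈ Ioo 0 Real.pi → ∃ l, Tendsto (PV (fun x => (prt u j x:ℂ)) (Real.cos θ)) (𝓝[>] 0) (𝓝 l) :=
    ae_all_iff.2 fun j => exist_pos (prt_int hu j) (prt_nn u j)
  filter_upwards [this] with θ h hθ
  choose l hl using fun j => h j hθ
  have h1 := tendsto_finsetSum (Finset.range 4) fun j _ => (hl j).const_mul (Complex.I ^ j)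
  have h2 : Tendsto (PV u (Real.cos θ)) (𝓝[>] 0) (𝓝 (∑ j ∈ Finset.range 4, Complex.I ^ j * l j)) := by
    refine h1.congr' ?_
    filter_upwards [self_mem_nhdsWithin] with ε hε
    have hε : 0 < ε := hε
    unfold PV
    have hi : ∀ j ∈ Finset.range 4, IntegrableOn (fun x => Complex.I ^ j * ((prt u j x : ℂ) * Ktr (Real.cos θ) ε x)) (Ioo (-1:ℝ) 1) :=
      fun j _ => (Integrable.mul_bdd (c := 1 / ε) (prt_int hu j) (Ktr_meas _ _).aestronglyMeasurable (ae_of_all _ (Ktr_bd hε))).const_mul _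
    simp only [tr_eq]
    have : ∫ x in Ioo (-1:ℝ) 1, u x * Ktr (Real.cos θ) ε x = ∑ j ∈ Finset.range 4,
        Complex.I ^ j * ∫ x in Ioo (-1:ℝ) 1, (prt u j x : ℂ) * Ktr (Real.cos θ) ε x := by
      simp only [← integral_const_mul]
      rw [← integral_finsetSum _ hi]
      congr 1; ext x
      conv_lhs => rw [prt_sum u x]
      rw [Finset.sum_mul]
      exact Finset.sum_congr rfl fun j _ => by ring
    rw [this, Finset.mul_sum]
    exact Finset.sum_congr rfl fun j _ => by ring
  rw [FHT_eq h2]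
  exact h2

lemma Phi_conj (u : ℝ → ℂ) (ζ : ℂ) :
    Phi u (starRingEnd ℂ ζ) = starRingEnd ℂ (Phi (fun x => starRingEnd ℂ (u x)) ζ) := by
  unfold Phi
  have h2 : starRingEnd ℂ 2 = 2 := Complex.conj_ofNat 2
  rw [map_mul, ← integral_conj]
  simp [h2]

lemma PV_conj (u : ℝ → ℂ) (t ε : ℝ) :
    PV (fun x => starRingEnd ℂ (u x)) t ε = starRingEnd ℂ (PV u t ε) := by
  unfold PV
  rw [map_mul, ← integral_conj]
  simp

lemma Phi_bv1 {u : ℝ → ℂ} (hu : IntegrableOn u (Ioo (-1:ℝ) 1)) {θ : ℝ} (hθ : θ ∈ Ioo 0 Real.pi)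
    (hL : LebPt u (Real.cos θ)) {L : ℂ} (h : Tendsto (PV u (Real.cos θ)) (𝓝[>] 0) (𝓝 L)) :
    Tendsto (fun r : ℝ => Phi u (r * circleMap 0 1 θ)) (𝓝[<] 1)
      (𝓝 (Real.sin θ * u (Real.cos θ) + Complex.I * (Real.sin θ * L))) := by
  have h1 := (Wp_tend θ).neg.mul (cau_of_pv hθ hu hL h)
  refine (Tendsto.congr' ?_ h1).trans (le_of_eq ?_)
  · filter_upwards [ev_Ioo] with r hr
    rw [Phi_eq' hr]
  · congr 1
    linear_combination - (Real.sin θ) * u (Real.cos θ) * Complex.I_sq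

lemma LebPt_conj {u : ℝ → ℂ} {t : ℝ} (h : LebPt u t) : LebPt (fun x => starRingEnd ℂ (u x)) t := by
  unfold LebPt at *
  simp only [← map_sub, RCLike.norm_conj]
  exact h

lemma Phi_bv2 {u : ℝ → ℂ} (hu : IntegrableOn u (Ioo (-1:ℝ) 1)) {θ : ℝ} (hθ : θ ∈ Ioo 0 Real.pi)
    (hL : LebPt u (Real.cos θ)) {L : ℂ} (h : Tendsto (PV u (Real.cos θ)) (𝓝[>] 0) (𝓝 L)) :
    Tendsto (fun r : ℝ => Phi u (r * circleMap 0 1 (-θ))) (𝓝[<] 1)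
      (𝓝 (Real.sin θ * u (Real.cos θ) - Complex.I * (Real.sin θ * L))) := by
  have hc : Tendsto (PV (fun x => starRingEnd ℂ (u x)) (Real.cos θ)) (𝓝[>] 0) (𝓝 (starRingEnd ℂ L)) := by
    refine ((Complex.continuous_conj.tendsto L).comp h).congr fun e => ?_
    rw [PV_conj]; rfl
  have huc : IntegrableOn (fun x => starRingEnd ℂ (u x)) (Ioo (-1:ℝ) 1) :=
    Complex.conjLIE.toContinuousLinearEquiv.toContinuousLinearMap.integrable_comp hu
  have h1 := (Complex.continuous_conj.tendsto _).comp (Phi_bv1 huc hθ (LebPt_conj hL) hc)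
  refine (Tendsto.congr ?_ h1).trans (le_of_eq ?_)
  · intro r
    rw [Function.comp_apply, ← Phi_conj]
    congr 1
    rw [map_mul, Complex.conj_ofReal]
    congr 1
    simp [circleMap, ← Complex.exp_conj]
  · congr 1
    simp only [map_add, map_mul, Complex.conj_ofReal, Complex.conj_conj, Complex.conj_I]
    ring


lemma cm_mul (r θ : ℝ) : (r:ℂ) * circleMap 0 1 θ = circleMap 0 r θ := by
  simp [circleMap]

lemma circ_eq {F : ℂ → ℂ} (r : ℝ) (ζ : ℂ) :
    (∮ w in C(0, r), (w - ζ)⁻¹ • F w) = Complex.I * ∫ θ in Ioo (-Real.pi) Real.pi,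
      F (r * circleMap 0 1 θ) * ((r * circleMap 0 1 θ) / (r * circleMap 0 1 θ - ζ)) := by
  rw [circleIntegral, ← integral_Ioc_eq_integral_Ioo, ← intervalIntegral.integral_of_le (by linarith [Real.pi_pos]),
    ← intervalIntegral.integral_const_mul]
  have hper : Function.Periodic (fun θ => deriv (circleMap 0 r) θ • ((circleMap 0 r θ - ζ)⁻¹ • F (circleMap 0 r θ))) (2 * Real.pi) := by
    intro θ
    simp only [deriv_circleMap, periodic_circleMap 0 r θ]
  have h := hper.intervalIntegral_add_eq 0 (-Real.pi)
  rw [zero_add, show -Real.pi + 2 * Real.pi = Real.pi by ring] at h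
  rw [h]
  refine intervalIntegral.integral_congr fun θ _ => ?_
  simp only [deriv_circleMap, cm_mul, smul_eq_mul]
  ring

lemma cauchy_in {F : ℂ → ℂ} (hF : DifferentiableOn ℂ F (Metric.ball 0 1)) {ζ : ℂ} {r : ℝ}
    (hr : r < 1) (hζ : ‖ζ‖ < r) :
    ∫ θ in Ioo (-Real.pi) Real.pi,
      F (r * circleMap 0 1 θ) * ((r * circleMap 0 1 θ) / (r * circleMap 0 1 θ - ζ)) = 2 * Real.pi * F ζ := by
  have hd : DiffContOnCl ℂ F (Metric.ball 0 r) :=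
    (hF.mono ((Metric.closure_ball_subset_closedBall).trans (Metric.closedBall_subset_ball hr))).diffContOnCl
  have := hd.circleIntegral_sub_inv_smul (w := ζ) (by simpa using hζ)
  rw [circ_eq, smul_eq_mul] at this
  refine mul_left_cancel₀ Complex.I_ne_zero ?_
  rw [this]; ring

lemma cauchy_out {F : ℂ → ℂ} (hF : DifferentiableOn ℂ F (Metric.ball 0 1)) {ζ : ℂ} {r : ℝ}
    (hr0 : 0 < r) (hr : r < 1) (hζ : 1 < ‖ζ‖) :
    ∫ θ in Ioo (-Real.pi) Real.pi,
      F (r * circleMap 0 1 θ) * ((r * circleMap 0 1 θ) / (r * circleMap 0 1 θ - ζ)) = 0 := by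
  have hd : DifferentiableOn ℂ (fun w => (w - ζ)⁻¹ • F w) (Metric.ball 0 1) := by
    have h1 : DifferentiableOn ℂ (fun w => w - ζ) (Metric.ball 0 1) := by fun_prop
    refine DifferentiableOn.smul (h1.inv fun w hw h => ?_) hF
    rw [sub_eq_zero] at h
    rw [h, mem_ball_zero_iff] at hw
    linarith
  have hd2 : DiffContOnCl ℂ (fun w => (w - ζ)⁻¹ • F w) (Metric.ball 0 r) :=
    (hd.mono ((Metric.closure_ball_subset_closedBall).trans (Metric.closedBall_subset_ball hr))).diffContOnCl
  have := hd2.circleIntegral_eq_zero hr0.le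
  rw [circ_eq] at this
  exact (mul_eq_zero.1 this).resolve_left Complex.I_ne_zero

lemma cont_path {F : ℂ → ℂ} (hF : DifferentiableOn ℂ F (Metric.ball 0 1)) {r : ℝ} (hr : r ∈ Ioo (0:ℝ) 1) :
    Continuous fun θ : ℝ => F (r * circleMap 0 1 θ) := by
  rw [← continuousOn_univ]
  refine hF.continuousOn.comp (t := Metric.ball 0 1) (f := fun θ : ℝ => (r:ℂ) * circleMap 0 1 θ) (by fun_prop) ?_
  intro θ _
  rw [mem_ball_zero_iff, nrm_cm, abs_of_pos hr.1]; exact hr.2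

lemma bv_meas {F : ℂ → ℂ} (hF : DifferentiableOn ℂ F (Metric.ball 0 1)) {m : ℝ → ℂ} {s : Set ℝ}
    (hm : ∀ᵐ θ ∂(volume.restrict s), Tendsto (fun r : ℝ => F (r * circleMap 0 1 θ)) (𝓝[<] 1) (𝓝 (m θ))) :
    AEStronglyMeasurable m (volume.restrict s) := by
  classical
  refine aestronglyMeasurable_of_tendsto_ae (𝓝[<] (1:ℝ))
    (f := fun r θ => if r ∈ Ioo (0:ℝ) 1 then F (r * circleMap 0 1 θ) else 0) ?_ ?_
  · intro r
    by_cases hr : r ∈ Ioo (0:ℝ) 1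
    · simp only [hr, if_true]
      exact (cont_path hF hr).aestronglyMeasurable
    · simp only [hr, if_false]
      exact aestronglyMeasurable_const
  · filter_upwards [hm] with θ h
    refine h.congr' ?_
    filter_upwards [ev_Ioo] with r hr
    simp only [hr, if_true]

lemma den_low (ζ : ℂ) (r θ : ℝ) (hr0 : 0 < r) (hr : |1 - r| ≤ |1 - ‖ζ‖| / 2) :
    |1 - ‖ζ‖| / 2 ≤ ‖(r:ℂ) * circleMap 0 1 θ - ζ‖ := by
  have h1 := abs_norm_sub_norm_le ((r:ℂ) * circleMap 0 1 θ) ζ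
  rw [nrm_cm, abs_of_pos hr0] at h1
  have h2 : |1 - ‖ζ‖| ≤ |1 - r| + |r - ‖ζ‖| := by
    have := abs_add_le (1 - r) (r - ‖ζ‖)
    simpa using this
  linarith

lemma bdd_lim {F : ℂ → ℂ} (hF : DifferentiableOn ℂ F (Metric.ball 0 1)) {B : ℝ}
    (hB : ∀ ζ ∈ Metric.ball (0:ℂ) 1, ‖F ζ‖ ≤ B) {m : ℝ → ℂ}
    (hm : ∀ᵐ θ ∂(volume.restrict (Ioo (-Real.pi) Real.pi)),
      Tendsto (fun r : ℝ => F (r * circleMap 0 1 θ)) (𝓝[<] 1) (𝓝 (m θ))) {ζ : ℂ} (hζ : ‖ζ‖ ≠ 1) {V : ℂ}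
    (hV : ∀ᶠ r : ℝ in 𝓝[<] 1, ∫ θ in Ioo (-Real.pi) Real.pi,
      F (r * circleMap 0 1 θ) * ((r * circleMap 0 1 θ) / (r * circleMap 0 1 θ - ζ)) = V) :
    ∫ θ in Ioo (-Real.pi) Real.pi, m θ * (circleMap 0 1 θ / (circleMap 0 1 θ - ζ)) = V := by
  have hδ : 0 < |1 - ‖ζ‖| / 2 := by
    have : 0 < |1 - ‖ζ‖| := abs_pos.2 (sub_ne_zero.2 (Ne.symm hζ))
    positivity
  have hev : ∀ᶠ r : ℝ in 𝓝[<] 1, |1 - r| ≤ |1 - ‖ζ‖| / 2 := by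
    have : Tendsto (fun r : ℝ => |1 - r|) (𝓝[<] 1) (𝓝 |1 - 1|) :=
      ((by fun_prop : Continuous fun r : ℝ => |1 - r|).tendsto 1).mono_left nhdsWithin_le_nhds
    rw [sub_self, abs_zero] at this
    filter_upwards [this.eventually (gt_mem_nhds hδ)] with r hr using hr.le
  have h0B : 0 ≤ B := (norm_nonneg _).trans (hB 0 (by simp))
  have hT : Tendsto (fun r : ℝ => ∫ θ in Ioo (-Real.pi) Real.pi,
      F (r * circleMap 0 1 θ) * ((r * circleMap 0 1 θ) / (r * circleMap 0 1 θ - ζ))) (𝓝[<] 1)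
      (𝓝 (∫ θ in Ioo (-Real.pi) Real.pi, m θ * (circleMap 0 1 θ / (circleMap 0 1 θ - ζ)))) := by
    refine tendsto_integral_filter_of_dominated_convergence (fun _ => B * (1 / (|1 - ‖ζ‖| / 2))) ?_ ?_ ?_ ?_
    · filter_upwards [ev_Ioo, hev] with r hr hr2
      refine Continuous.aestronglyMeasurable ?_
      refine (cont_path hF hr).mul (Continuous.div (by fun_prop) (by fun_prop) fun θ h => ?_)
      have := den_low ζ r θ hr.1 hr2
      rw [h, norm_zero] at this
      linarith
    · filter_upwards [ev_Ioo, hev] with r hr hr2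
      refine ae_of_all _ fun θ => ?_
      rw [norm_mul, norm_div]
      have h1 := den_low ζ r θ hr.1 hr2
      have h2 : ‖(r:ℂ) * circleMap 0 1 θ‖ ≤ 1 := by rw [nrm_cm, abs_of_pos hr.1]; exact hr.2.le
      refine mul_le_mul (hB _ ?_) ?_ (by positivity) h0B
      · rw [mem_ball_zero_iff, nrm_cm, abs_of_pos hr.1]; exact hr.2
      · exact div_le_div₀ zero_le_one h2 hδ h1
    · exact integrableOn_const (by simp)
    · filter_upwards [hm] with θ h
      refine h.mul ?_
      have hc : Tendsto (fun r : ℝ => (r:ℂ) * circleMap 0 1 θ) (𝓝[<] 1) (𝓝 (circleMap 0 1 θ)) := by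
        have := ((by fun_prop : Continuous fun r : ℝ => (r:ℂ) * circleMap 0 1 θ).tendsto 1).mono_left (nhdsWithin_le_nhds (s := Iio 1))
        simpa using this
      refine hc.div (hc.sub_const ζ) fun h => ?_
      have := den_low ζ 1 θ one_pos (by simpa using hδ.le)
      rw [Complex.ofReal_one, one_mul, h, norm_zero] at this
      linarith
  exact tendsto_nhds_unique hT (tendsto_const_nhds.congr' (by filter_upwards [hV] with r hr; exact hr.symm))

lemma smirnov {H : ℂ → ℂ} (hH : DifferentiableOn ℂ H (Metric.ball 0 1)) {M : ℕ → ℂ → ℂ}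
    (hM : ∀ n, DifferentiableOn ℂ (M n) (Metric.ball 0 1))
    (hM1 : ∀ n, ∀ ζ ∈ Metric.ball (0:ℂ) 1, ‖M n ζ‖ ≤ 1)
    (hB : ∀ n, ∃ B, ∀ ζ ∈ Metric.ball (0:ℂ) 1, ‖H ζ * M n ζ‖ ≤ B)
    (hMlim : ∀ ζ ∈ Metric.ball (0:ℂ) 1, Tendsto (fun n => M n ζ) atTop (𝓝 1))
    {h : ℝ → ℂ} {m : ℕ → ℝ → ℂ} (hi : IntegrableOn h (Ioo (-Real.pi) Real.pi))
    (hh : ∀ᵐ θ ∂(volume.restrict (Ioo (-Real.pi) Real.pi)),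
      Tendsto (fun r : ℝ => H (r * circleMap 0 1 θ)) (𝓝[<] 1) (𝓝 (h θ)))
    (hm : ∀ n, ∀ᵐ θ ∂(volume.restrict (Ioo (-Real.pi) Real.pi)),
      Tendsto (fun r : ℝ => M n (r * circleMap 0 1 θ)) (𝓝[<] 1) (𝓝 (m n θ)))
    (hml : ∀ᵐ θ ∂(volume.restrict (Ioo (-Real.pi) Real.pi)), Tendsto (fun n => m n θ) atTop (𝓝 1))
    {ζ : ℂ} (hζ : ‖ζ‖ ≠ 1) {V : ℂ} (hV : (‖ζ‖ < 1 ∧ V = 2 * Real.pi * H ζ) ∨ (1 < ‖ζ‖ ∧ V = 0)) :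
    ∫ θ in Ioo (-Real.pi) Real.pi, h θ * (circleMap 0 1 θ / (circleMap 0 1 θ - ζ)) = V := by
  have hδ : 0 < |1 - ‖ζ‖| / 2 := by
    have : 0 < |1 - ‖ζ‖| := abs_pos.2 (sub_ne_zero.2 (Ne.symm hζ))
    positivity
  have hdl : ∀ θ, |1 - ‖ζ‖| / 2 ≤ ‖circleMap 0 1 θ - ζ‖ := fun θ => by
    have := den_low ζ 1 θ one_pos (by simpa using hδ.le)
    rwa [Complex.ofReal_one, one_mul] at this
  obtain ⟨Vn, hVn, hVn2⟩ : ∃ Vn : ℕ → ℂ, Tendsto Vn atTop (𝓝 V) ∧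
      ∀ n, ∫ θ in Ioo (-Real.pi) Real.pi, (h θ * m n θ) * (circleMap 0 1 θ / (circleMap 0 1 θ - ζ)) = Vn n := by
    have hbv : ∀ n, ∀ᵐ θ ∂(volume.restrict (Ioo (-Real.pi) Real.pi)),
      Tendsto (fun r : ℝ => H (r * circleMap 0 1 θ) * M n (r * circleMap 0 1 θ)) (𝓝[<] 1) (𝓝 (h θ * m n θ)) := by
      intro n
      filter_upwards [hh, hm n] with θ a b using a.mul b
    have hdd : ∀ n, DifferentiableOn ℂ (fun z => H z * M n z) (Metric.ball 0 1) := fun n => hH.mul (hM n)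
    rcases hV with ⟨h1, h2⟩ | ⟨h1, h2⟩
    · refine ⟨fun n => 2 * Real.pi * (H ζ * M n ζ), ?_, fun n => ?_⟩
      · rw [h2]
        have := ((hMlim ζ (by simpa using h1)).const_mul (H ζ)).const_mul (2 * Real.pi : ℂ)
        rwa [mul_one] at this
      · obtain ⟨B, hB⟩ := hB n
        refine bdd_lim (hdd n) hB (hbv n) hζ ?_
        filter_upwards [Ioo_mem_nhdsLT h1] with r hr
        exact cauchy_in (hdd n) hr.2 hr.1
    · refine ⟨fun n => 0, ?_, fun n => ?_⟩
      · rw [h2]; exact tendsto_const_nhds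
      · obtain ⟨B, hB⟩ := hB n
        refine bdd_lim (hdd n) hB (hbv n) hζ ?_
        filter_upwards [ev_Ioo] with r hr
        exact cauchy_out (hdd n) hr.1 hr.2 h1
  have hkc : Continuous fun θ => circleMap 0 1 θ / (circleMap 0 1 θ - ζ) := by
    refine Continuous.div (by fun_prop) (by fun_prop) fun θ h => ?_
    have := hdl θ
    rw [h, norm_zero] at this
    linarith
  have hkb : ∀ θ, ‖circleMap 0 1 θ / (circleMap 0 1 θ - ζ)‖ ≤ 1 / (|1 - ‖ζ‖| / 2) := fun θ => by
    rw [norm_div]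
    refine div_le_div₀ zero_le_one ?_ hδ (hdl θ)
    simp [norm_circleMap_zero]
  have hm1 : ∀ n, ∀ᵐ θ ∂(volume.restrict (Ioo (-Real.pi) Real.pi)), ‖m n θ‖ ≤ 1 := by
    intro n
    filter_upwards [hm n] with θ hθ
    refine le_of_tendsto hθ.norm ?_
    filter_upwards [ev_Ioo] with r hr
    refine hM1 n _ ?_
    rw [mem_ball_zero_iff, nrm_cm, abs_of_pos hr.1]; exact hr.2
  have hT : Tendsto (fun n => ∫ θ in Ioo (-Real.pi) Real.pi, (h θ * m n θ) * (circleMap 0 1 θ / (circleMap 0 1 θ - ζ))) atTop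
      (𝓝 (∫ θ in Ioo (-Real.pi) Real.pi, h θ * (circleMap 0 1 θ / (circleMap 0 1 θ - ζ)))) := by
    refine tendsto_integral_of_dominated_convergence (fun θ => ‖h θ‖ * (1 / (|1 - ‖ζ‖| / 2))) ?_ ?_ ?_ ?_
    · intro n
      exact (hi.1.mul (bv_meas (hM n) (hm n))).mul hkc.aestronglyMeasurable
    · exact hi.norm.mul_const _
    · intro n
      filter_upwards [hm1 n] with θ hθ
      rw [norm_mul, norm_mul]
      refine mul_le_mul ?_ (hkb θ) (norm_nonneg _) (norm_nonneg _)
      exact mul_le_of_le_one_right (norm_nonneg _) hθ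
    · filter_upwards [hml] with θ hθ
      have := (hθ.const_mul (h θ)).mul_const (circleMap 0 1 θ / (circleMap 0 1 θ - ζ))
      rwa [mul_one] at this
  simp only [hVn2] at hT
  exact tendsto_nhds_unique hT hVn


lemma ae_sym {P : ℝ → Prop} (h : ∀ᵐ θ : ℝ, θ ∈ Ioo 0 Real.pi → P θ ∧ P (-θ)) :
    ∀ᵐ θ ∂(volume.restrict (Ioo (-Real.pi) Real.pi)), P θ := by
  rw [ae_restrict_iff' measurableSet_Ioo]
  have h2 := (Measure.measurePreserving_neg (volume : Measure ℝ)).quasiMeasurePreserving.ae h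
  filter_upwards [h, h2, Measure.ae_ne volume (0:ℝ)] with θ a b c hθ
  rcases lt_or_gt_of_ne c with hlt | hlt
  · have := (b ⟨by linarith, by linarith [hθ.1]⟩).2
    rwa [neg_neg] at this
  · exact (a ⟨hlt, hθ.2⟩).1

lemma int_neg_iff {F : ℝ → ℂ} (h : IntegrableOn (fun θ => F (-θ)) (Ioo 0 Real.pi)) :
    IntegrableOn F (Ioo (-Real.pi) 0) := by
  have := (Measure.measurePreserving_neg (volume : Measure ℝ)).integrableOn_comp_preimage
    (Homeomorph.neg ℝ).measurableEmbedding (f := F) (s := Ioo (-Real.pi) 0)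
  rw [← this]
  simpa [Function.comp_def] using h

lemma Ioo_split : Ioo (-Real.pi) Real.pi =ᵐ[volume] (Ioo (-Real.pi) 0 ∪ Ioo 0 Real.pi : Set ℝ) := by
  have hpi := Real.pi_pos
  filter_upwards [Measure.ae_ne volume (0:ℝ)] with θ hθ
  apply propext
  change θ ∈ Ioo (-Real.pi) Real.pi ↔ θ ∈ (Ioo (-Real.pi) 0 ∪ Ioo 0 Real.pi : Set ℝ)
  simp only [mem_Ioo, mem_union]
  rcases lt_or_gt_of_ne hθ with hlt | hlt
  · constructor
    · rintro ⟨a, b⟩; exact Or.inl ⟨a, hlt⟩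
    · rintro (⟨a, b⟩ | ⟨a, b⟩) <;> constructor <;> linarith
  · constructor
    · rintro ⟨a, b⟩; exact Or.inr ⟨hlt, b⟩
    · rintro (⟨a, b⟩ | ⟨a, b⟩) <;> constructor <;> linarith

lemma int_sym_on {F : ℝ → ℂ} (h1 : IntegrableOn F (Ioo 0 Real.pi))
    (h2 : IntegrableOn (fun θ => F (-θ)) (Ioo 0 Real.pi)) : IntegrableOn F (Ioo (-Real.pi) Real.pi) := by
  rw [integrableOn_congr_set_ae Ioo_split]
  exact (int_neg_iff h2).union h1

lemma int_sym {F : ℝ → ℂ} (h1 : IntegrableOn F (Ioo 0 Real.pi))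
    (h2 : IntegrableOn (fun θ => F (-θ)) (Ioo 0 Real.pi)) :
    ∫ θ in Ioo (-Real.pi) Real.pi, F θ = ∫ θ in Ioo 0 Real.pi, (F θ + F (-θ)) := by
  rw [setIntegral_congr_set Ioo_split, setIntegral_union _ measurableSet_Ioo (int_neg_iff h2) h1,
    integral_add h1 h2, add_comm]
  · congr 1
    have := (Measure.measurePreserving_neg (volume : Measure ℝ)).setIntegral_preimage_emb
      (Homeomorph.neg ℝ).measurableEmbedding F (Ioo (-Real.pi) 0)
    rw [← this]
    simp
  · rw [Set.disjoint_left]; intro x hx hx'; have := hx.2; have := hx'.1; linarith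

lemma cos_image : Real.cos '' Ioo 0 Real.pi = Ioo (-1:ℝ) 1 := by
  ext t
  constructor
  · rintro ⟨θ, hθ, rfl⟩; exact cos_mem hθ
  · intro ht
    refine ⟨Real.arccos t, ⟨Real.arccos_pos.2 ht.2, ?_⟩, Real.cos_arccos ht.1.le ht.2.le⟩
    refine lt_of_le_of_ne (Real.arccos_le_pi t) fun h => ?_
    have := Real.arccos_eq_pi.1 h
    linarith [ht.1]

lemma cov_int {G : ℝ → ℂ} (hG : IntegrableOn G (Ioo (-1:ℝ) 1)) :
    IntegrableOn (fun θ => (Real.sin θ : ℂ) * G (Real.cos θ)) (Ioo 0 Real.pi) := by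
  rw [← cos_image, integrableOn_image_iff_integrableOn_abs_deriv_smul measurableSet_Ioo
    (fun θ _ => (Real.hasDerivAt_cos θ).hasDerivWithinAt)
    (Real.injOn_cos.mono Ioo_subset_Icc_self)] at hG
  refine hG.congr_fun (fun θ hθ => ?_) measurableSet_Ioo
  simp only [abs_neg, abs_of_pos (Real.sin_pos_of_mem_Ioo hθ), Complex.real_smul]

lemma cov {G : ℝ → ℂ} : ∫ x in Ioo (-1:ℝ) 1, G x =
    ∫ θ in Ioo 0 Real.pi, (Real.sin θ : ℂ) * G (Real.cos θ) := by
  rw [← cos_image, integral_image_eq_integral_abs_deriv_smul measurableSet_Ioo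
    (fun θ _ => (Real.hasDerivAt_cos θ).hasDerivWithinAt)
    (Real.injOn_cos.mono Ioo_subset_Icc_self)]
  refine setIntegral_congr_fun measurableSet_Ioo (fun θ hθ => ?_)
  simp only [abs_neg, abs_of_pos (Real.sin_pos_of_mem_Ioo hθ), Complex.real_smul]

def hbv (f g : ℝ → ℂ) (θ : ℝ) : ℂ :=
  (|Real.sin θ| : ℝ) * f (Real.cos θ) + Complex.I * ((Real.sin θ : ℝ) * g (Real.cos θ))

lemma hbv_pos {f g : ℝ → ℂ} {θ : ℝ} (hθ : θ ∈ Ioo 0 Real.pi) : hbv f g θ =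
    Real.sin θ * f (Real.cos θ) + Complex.I * (Real.sin θ * g (Real.cos θ)) := by
  rw [hbv, abs_of_pos (Real.sin_pos_of_mem_Ioo hθ)]

lemma hbv_neg {f g : ℝ → ℂ} {θ : ℝ} (hθ : θ ∈ Ioo 0 Real.pi) : hbv f g (-θ) =
    Real.sin θ * f (Real.cos θ) - Complex.I * (Real.sin θ * g (Real.cos θ)) := by
  rw [hbv, Real.sin_neg, abs_neg, abs_of_pos (Real.sin_pos_of_mem_Ioo hθ), Real.cos_neg]
  push_cast; ring

lemma hbv_int1 {f g : ℝ → ℂ} (hf : IntegrableOn f (Ioo (-1:ℝ) 1)) (hg : IntegrableOn g (Ioo (-1:ℝ) 1)) :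
    IntegrableOn (hbv f g) (Ioo 0 Real.pi) :=
  ((cov_int hf).add ((cov_int hg).const_mul Complex.I)).congr_fun
    (fun θ hθ => (hbv_pos hθ).symm) measurableSet_Ioo

lemma hbv_int2 {f g : ℝ → ℂ} (hf : IntegrableOn f (Ioo (-1:ℝ) 1)) (hg : IntegrableOn g (Ioo (-1:ℝ) 1)) :
    IntegrableOn (fun θ => hbv f g (-θ)) (Ioo 0 Real.pi) :=
  ((cov_int hf).sub ((cov_int hg).const_mul Complex.I)).congr_fun
    (fun θ hθ => (hbv_neg hθ).symm) measurableSet_Ioo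

lemma ker_id (ζ : ℂ) (h0 : ζ ≠ 0) (h1 : ‖ζ‖ < 1) (θ : ℝ) :
    circleMap 0 1 θ / (circleMap 0 1 θ - ζ) + circleMap 0 1 θ / (circleMap 0 1 θ - ζ⁻¹) - 1 =
      Complex.I * Real.sin θ / ((Real.cos θ : ℂ) - (1 + ζ ^ 2) / (2 * ζ)) ∧
    circleMap 0 1 θ / (circleMap 0 1 θ - ζ) - circleMap 0 1 θ / (circleMap 0 1 θ - ζ⁻¹) =
      -((1 - ζ ^ 2) / (2 * ζ)) * (1 / ((Real.cos θ : ℂ) - (1 + ζ ^ 2) / (2 * ζ))) ∧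
      (Real.cos θ : ℂ) - (1 + ζ ^ 2) / (2 * ζ) ≠ 0 := by
  set ω := circleMap 0 1 θ with hω
  have hne : ω ≠ 0 := cm_ne θ
  have hn : ‖ω‖ = 1 := by simp [hω, norm_circleMap_zero]
  have a1 : ω - ζ ≠ 0 := fun h => by
    rw [sub_eq_zero] at h; rw [← h, hn] at h1; exact lt_irrefl _ h1
  have a2 : ω * ζ - 1 ≠ 0 := fun h => by
    have : ‖ω * ζ‖ = 1 := by rw [sub_eq_zero.1 h, norm_one]
    rw [norm_mul, hn, one_mul] at this
    linarith
  have hcos : (Real.cos θ : ℂ) = (ω + ω⁻¹) / 2 := by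
    rw [hω, cm_inv, cm_eq]; push_cast; ring
  have hsin : Complex.I * (Real.sin θ : ℂ) = (ω - ω⁻¹) / 2 := by
    rw [hω, cm_inv, cm_eq]; push_cast; ring
  have hden : (Real.cos θ : ℂ) - (1 + ζ ^ 2) / (2 * ζ) = (ω - ζ) * (ω * ζ - 1) / (2 * ω * ζ) := by
    rw [hcos]; field_simp; ring
  have a3 : ω - ζ⁻¹ = (ω * ζ - 1) / ζ := by field_simp
  rw [hden, hsin, a3]
  refine ⟨?_, ?_, ?_⟩
  · field_simp; ring
  · field_simp; ring
  · exact div_ne_zero (mul_ne_zero a1 a2) (by simp [hne, h0])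

lemma kint {h : ℝ → ℂ} {s : Set ℝ} (hi : IntegrableOn h s) {ζ : ℂ} (hζ : ‖ζ‖ ≠ 1) :
    IntegrableOn (fun θ => h θ * (circleMap 0 1 θ / (circleMap 0 1 θ - ζ))) s := by
  have hδ : 0 < |1 - ‖ζ‖| / 2 := by
    have : 0 < |1 - ‖ζ‖| := abs_pos.2 (sub_ne_zero.2 (Ne.symm hζ))
    positivity
  have hdl : ∀ θ, |1 - ‖ζ‖| / 2 ≤ ‖circleMap 0 1 θ - ζ‖ := fun θ => by
    have := den_low ζ 1 θ one_pos (by simpa using hδ.le)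
    rwa [Complex.ofReal_one, one_mul] at this
  refine Integrable.mul_bdd (c := 1 / (|1 - ‖ζ‖| / 2)) hi ?_ (ae_of_all _ fun θ => ?_)
  · refine Continuous.aestronglyMeasurable ?_
    refine Continuous.div (by fun_prop) (by fun_prop) fun θ h => ?_
    have := hdl θ
    rw [h, norm_zero] at this
    linarith
  · rw [norm_div]
    refine div_le_div₀ zero_le_one ?_ hδ (hdl θ)
    simp [norm_circleMap_zero]

lemma bv_repr {f g : ℝ → ℂ} (hf : IntegrableOn f (Ioo (-1:ℝ) 1)) (hg : IntegrableOn g (Ioo (-1:ℝ) 1))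
    {H : ℂ → ℂ}
    (hin : ∀ ζ : ℂ, ‖ζ‖ < 1 → ∫ θ in Ioo (-Real.pi) Real.pi,
      hbv f g θ * (circleMap 0 1 θ / (circleMap 0 1 θ - ζ)) = 2 * Real.pi * H ζ)
    (hout : ∀ ζ : ℂ, 1 < ‖ζ‖ → ∫ θ in Ioo (-Real.pi) Real.pi,
      hbv f g θ * (circleMap 0 1 θ / (circleMap 0 1 θ - ζ)) = 0)
    (ζ : ℂ) (h0 : ζ ≠ 0) (h1 : ‖ζ‖ < 1) :
    H ζ - H 0 = - Cau (fun t => (Real.sqrt (1 - t ^ 2) : ℂ) * g t) ((1 + ζ ^ 2) / (2 * ζ)) ∧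
    H ζ = -((1 - ζ ^ 2) / (2 * ζ)) * Cau f ((1 + ζ ^ 2) / (2 * ζ)) := by
  have hpi : (Real.pi : ℂ) ≠ 0 := by exact_mod_cast Real.pi_ne_zero
  have h1' : 1 < ‖ζ⁻¹‖ := by
    rw [norm_inv]; exact (one_lt_inv₀ (norm_pos_iff.2 h0)).2 h1
  set z := (1 + ζ ^ 2) / (2 * ζ) with hz
  have hiS := int_sym_on (hbv_int1 hf hg) (hbv_int2 hf hg)
  have k1 := hin ζ h1
  have k2 := hout _ h1'
  have k3 : ∫ θ in Ioo (-Real.pi) Real.pi, hbv f g θ = 2 * Real.pi * H 0 := by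
    rw [← hin 0 (by simp)]
    congr 1; ext θ
    rw [sub_zero, div_self (cm_ne θ), mul_one]
  have i1 : ∀ s, IntegrableOn (hbv f g) s → IntegrableOn (fun θ => hbv f g θ * (circleMap 0 1 θ / (circleMap 0 1 θ - ζ))) s :=
    fun s hs => kint hs h1.ne
  have i2 : ∀ s, IntegrableOn (hbv f g) s → IntegrableOn (fun θ => hbv f g θ * (circleMap 0 1 θ / (circleMap 0 1 θ - ζ⁻¹))) s :=
    fun s hs => kint hs h1'.ne'
  have hsub1 : Ioo 0 Real.pi ⊆ Ioo (-Real.pi) Real.pi := Ioo_subset_Ioo_left (by linarith [Real.pi_pos])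
  have neg_int : ∀ F : ℝ → ℂ, IntegrableOn F (Ioo (-Real.pi) Real.pi) → IntegrableOn (fun θ => F (-θ)) (Ioo 0 Real.pi) := by
    intro F hF
    have := (Measure.measurePreserving_neg (volume : Measure ℝ)).integrableOn_comp_preimage
      (Homeomorph.neg ℝ).measurableEmbedding (f := F) (s := Ioo (-Real.pi) 0)
    have h2 := this.2 (hF.mono_set (Ioo_subset_Ioo_right Real.pi_pos.le))
    simpa [Function.comp_def] using h2
  constructor
  · have e1 : ∫ θ in Ioo (-Real.pi) Real.pi, hbv f g θ * (Complex.I * Real.sin θ / ((Real.cos θ : ℂ) - z)) =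
        2 * Real.pi * (H ζ - H 0) := by
      have : ∀ θ, hbv f g θ * (Complex.I * Real.sin θ / ((Real.cos θ : ℂ) - z)) =
          hbv f g θ * (circleMap 0 1 θ / (circleMap 0 1 θ - ζ)) + hbv f g θ * (circleMap 0 1 θ / (circleMap 0 1 θ - ζ⁻¹)) - hbv f g θ := by
        intro θ
        rw [← (ker_id ζ h0 h1 θ).1]; ring
      simp only [this]
      rw [integral_sub (Integrable.fun_add (i1 _ hiS) (i2 _ hiS)) hiS, integral_add (i1 _ hiS) (i2 _ hiS), k1, k2, k3]
      ring
    have hI : IntegrableOn (fun θ => hbv f g θ * (Complex.I * Real.sin θ / ((Real.cos θ : ℂ) - z))) (Ioo (-Real.pi) Real.pi) := by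
      refine (((i1 _ hiS).add (i2 _ hiS)).sub hiS).congr_fun (fun θ _ => ?_) measurableSet_Ioo
      simp only [Pi.add_apply, Pi.sub_apply]
      rw [← (ker_id ζ h0 h1 θ).1]; ring
    rw [int_sym (hI.mono_set hsub1) (neg_int _ hI)] at e1
    have e2 : ∫ θ in Ioo 0 Real.pi, (hbv f g θ * (Complex.I * Real.sin θ / ((Real.cos θ : ℂ) - z)) +
        hbv f g (-θ) * (Complex.I * Real.sin (-θ) / ((Real.cos (-θ) : ℂ) - z))) =
        -2 * ∫ x in Ioo (-1:ℝ) 1, ((Real.sqrt (1 - x ^ 2) : ℂ) * g x) / ((x:ℂ) - z) := by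
      rw [cov, ← integral_const_mul]
      refine setIntegral_congr_fun measurableSet_Ioo (fun θ hθ => ?_)
      rw [hbv_pos hθ, hbv_neg hθ, Real.cos_neg, Real.sin_neg, show 1 - Real.cos θ ^ 2 = Real.sin θ ^ 2 by
        rw [Real.sin_sq], Real.sqrt_sq (Real.sin_pos_of_mem_Ioo hθ).le]
      push_cast
      linear_combination (2 * Complex.sin θ * Complex.sin θ * g (Real.cos θ) / (Complex.cos θ - z)) * Complex.I_sq
    rw [e2] at e1
    unfold Cau
    have h2 : (2 * Real.pi : ℂ) ≠ 0 := by simp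
    refine mul_left_cancel₀ h2 ?_
    rw [← e1]
    field_simp
  · have e1 : ∫ θ in Ioo (-Real.pi) Real.pi, hbv f g θ * (-((1 - ζ ^ 2) / (2 * ζ)) * (1 / ((Real.cos θ : ℂ) - z))) =
        2 * Real.pi * H ζ := by
      have : ∀ θ, hbv f g θ * (-((1 - ζ ^ 2) / (2 * ζ)) * (1 / ((Real.cos θ : ℂ) - z))) =
          hbv f g θ * (circleMap 0 1 θ / (circleMap 0 1 θ - ζ)) - hbv f g θ * (circleMap 0 1 θ / (circleMap 0 1 θ - ζ⁻¹)) := by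
        intro θ
        rw [← (ker_id ζ h0 h1 θ).2.1]; ring
      simp only [this]
      rw [integral_sub (i1 _ hiS) (i2 _ hiS), k1, k2]
      ring
    have hI : IntegrableOn (fun θ => hbv f g θ * (-((1 - ζ ^ 2) / (2 * ζ)) * (1 / ((Real.cos θ : ℂ) - z)))) (Ioo (-Real.pi) Real.pi) := by
      refine ((i1 _ hiS).sub (i2 _ hiS)).congr_fun (fun θ _ => ?_) measurableSet_Ioo
      simp only [Pi.sub_apply]
      rw [← (ker_id ζ h0 h1 θ).2.1]; ring
    rw [int_sym (hI.mono_set hsub1) (neg_int _ hI)] at e1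
    have e2 : ∫ θ in Ioo 0 Real.pi, (hbv f g θ * (-((1 - ζ ^ 2) / (2 * ζ)) * (1 / ((Real.cos θ : ℂ) - z))) +
        hbv f g (-θ) * (-((1 - ζ ^ 2) / (2 * ζ)) * (1 / ((Real.cos (-θ) : ℂ) - z)))) =
        (-((1 - ζ ^ 2) / (2 * ζ)) * 2) * ∫ x in Ioo (-1:ℝ) 1, f x / ((x:ℂ) - z) := by
      rw [cov, ← integral_const_mul]
      refine setIntegral_congr_fun measurableSet_Ioo (fun θ hθ => ?_)
      rw [hbv_pos hθ, hbv_neg hθ, Real.cos_neg]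
      ring
    rw [e2] at e1
    unfold Cau
    have h2 : (2 * Real.pi : ℂ) ≠ 0 := by simp
    refine mul_left_cancel₀ h2 ?_
    rw [← e1]
    field_simp


lemma Phi_bv {u : ℝ → ℂ} (hu : IntegrableOn u (Ioo (-1:ℝ) 1)) :
    ∀ᵐ θ ∂(volume.restrict (Ioo (-Real.pi) Real.pi)),
      Tendsto (fun r : ℝ => Phi u (r * circleMap 0 1 θ)) (𝓝[<] 1) (𝓝 (hbv u (FHT u) θ)) := by
  refine ae_sym ?_
  filter_upwards [ae_cos (ae_leb hu), exist_pv hu] with θ h1 h2 hθ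
  rw [hbv_pos hθ, hbv_neg hθ]
  exact ⟨Phi_bv1 hu hθ (h1 hθ) (h2 hθ), Phi_bv2 hu hθ (h1 hθ) (h2 hθ)⟩

lemma Phi_sum {u : ℝ → ℂ} (hu : IntegrableOn u (Ioo (-1:ℝ) 1)) (ζ : ℂ) (hζ : ‖ζ‖ < 1) :
    Phi u ζ = ∑ j ∈ Finset.range 4, Complex.I ^ j * Phi (fun x => (prt u j x : ℂ)) ζ := by
  unfold Phi
  have hi : ∀ j ∈ Finset.range 4, IntegrableOn (fun x : ℝ => Complex.I ^ j * ((prt u j x : ℂ) * ((1 - ζ ^ 2) / (1 - 2 * ζ * x + ζ ^ 2)))) (Ioo (-1:ℝ) 1) :=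
    fun j _ => (Phi_int (prt_int hu j) ζ hζ).const_mul _
  have : ∫ x in Ioo (-1 : ℝ) 1, u x * ((1 - ζ ^ 2) / (1 - 2 * ζ * x + ζ ^ 2)) = ∑ j ∈ Finset.range 4,
      Complex.I ^ j * ∫ x in Ioo (-1:ℝ) 1, (prt u j x : ℂ) * ((1 - ζ ^ 2) / (1 - 2 * ζ * x + ζ ^ 2)) := by
    simp only [← integral_const_mul]
    rw [← integral_finsetSum _ hi]
    congr 1; ext x
    conv_lhs => rw [prt_sum u x]
    rw [Finset.sum_mul]
    exact Finset.sum_congr rfl fun j _ => by ring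
  rw [this, Finset.mul_sum]
  exact Finset.sum_congr rfl fun j _ => by ring

lemma re_low {a : ℂ} (ha : 0 ≤ a.re) {s : ℝ} (hs : 0 ≤ s) : s ≤ ‖(s:ℂ) + a‖ ∧ ‖a‖ ≤ ‖(s:ℂ) + a‖ := by
  constructor
  · have := Complex.re_le_norm ((s:ℂ) + a)
    simp only [Complex.add_re, Complex.ofReal_re] at this
    linarith
  · rw [← sq_le_sq₀ (norm_nonneg _) (norm_nonneg _), Complex.sq_norm, Complex.sq_norm,
      Complex.normSq_apply, Complex.normSq_apply]
    simp only [Complex.add_re, Complex.ofReal_re, Complex.add_im, Complex.ofReal_im, zero_add]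
    nlinarith

lemma re_sq {ζ : ℂ} (h : ‖ζ‖ ≤ 1) : 0 ≤ (1 - ζ ^ 2).re := by
  have := Complex.re_le_norm (ζ ^ 2)
  rw [norm_pow] at this
  have h2 : ‖ζ‖ ^ 2 ≤ 1 := pow_le_one₀ (norm_nonneg _) h
  simp only [Complex.sub_re, Complex.one_re]
  linarith

def dl (n : ℕ) : ℝ := 1 / ((n:ℝ) + 1)

lemma dl_pos (n : ℕ) : 0 < dl n := by unfold dl; positivity

def Mu (u : ℝ → ℂ) (n : ℕ) (ζ : ℂ) : ℂ :=
  (1 - ζ ^ 2) / ((dl n : ℂ) + (1 - ζ ^ 2)) *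
    ∏ j ∈ Finset.range 4, (((1:ℝ):ℂ) + (dl n : ℂ) * Phi (fun x => (prt u j x : ℂ)) ζ)⁻¹

lemma one_low {a : ℂ} (ha : 0 ≤ a.re) (n : ℕ) : 1 ≤ ‖((1:ℝ):ℂ) + (dl n : ℂ) * a‖ ∧
    dl n * ‖a‖ ≤ ‖((1:ℝ):ℂ) + (dl n : ℂ) * a‖ := by
  have h := re_low (a := (dl n : ℂ) * a) (by rw [Complex.re_ofReal_mul]; exact mul_nonneg (dl_pos n).le ha) zero_le_one
  rw [norm_mul (dl n : ℂ), Complex.norm_real, Real.norm_of_nonneg (dl_pos n).le] at h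
  exact h

lemma P_bd {Q : ℕ → ℂ} (hQ : ∀ j, 0 ≤ (Q j).re) (n : ℕ) :
    ‖∏ j ∈ Finset.range 4, (((1:ℝ):ℂ) + (dl n : ℂ) * Q j)⁻¹‖ ≤ 1 := by
  rw [norm_prod]
  refine Finset.prod_le_one (fun j _ => norm_nonneg _) fun j _ => ?_
  rw [norm_inv]
  exact inv_le_one_of_one_le₀ (one_low (hQ j) n).1

lemma QP_bd {Q : ℕ → ℂ} (hQ : ∀ j, 0 ≤ (Q j).re) (n : ℕ) {i : ℕ} (hi : i ∈ Finset.range 4) :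
    ‖Q i * ∏ j ∈ Finset.range 4, (((1:ℝ):ℂ) + (dl n : ℂ) * Q j)⁻¹‖ ≤ 1 / dl n := by
  rw [← Finset.mul_prod_erase _ _ hi, ← mul_assoc, norm_mul]
  have h1 : ‖∏ j ∈ (Finset.range 4).erase i, (((1:ℝ):ℂ) + (dl n : ℂ) * Q j)⁻¹‖ ≤ 1 := by
    rw [norm_prod]
    refine Finset.prod_le_one (fun j _ => norm_nonneg _) fun j _ => ?_
    rw [norm_inv]
    exact inv_le_one_of_one_le₀ (one_low (hQ j) n).1
  refine (mul_le_of_le_one_right (norm_nonneg _) h1).trans ?_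
  have h2 := one_low (hQ i) n
  rw [norm_mul, norm_inv, ← div_eq_mul_inv, div_le_div_iff₀ (by linarith) (dl_pos n)]
  linarith

lemma mult {u : ℝ → ℂ} (hu : IntegrableOn u (Ioo (-1:ℝ) 1)) {f g : ℝ → ℂ}
    (hf : IntegrableOn f (Ioo (-1:ℝ) 1)) (hg : IntegrableOn g (Ioo (-1:ℝ) 1)) {H b : ℂ → ℂ} {c : ℂ}
    (hH : DifferentiableOn ℂ H (Metric.ball 0 1))
    (hHe : ∀ ζ : ℂ, ‖ζ‖ < 1 → H ζ * (1 - ζ ^ 2) = c * (1 - ζ ^ 2) + b ζ * Phi u ζ)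
    (hb : ∀ ζ : ℂ, ‖ζ‖ < 1 → ‖b ζ‖ ≤ 2)
    (hh : ∀ᵐ θ ∂(volume.restrict (Ioo (-Real.pi) Real.pi)),
      Tendsto (fun r : ℝ => H (r * circleMap 0 1 θ)) (𝓝[<] 1) (𝓝 (hbv f g θ)))
    (ζ : ℂ) (h0 : ζ ≠ 0) (h1 : ‖ζ‖ < 1) :
    H ζ - H 0 = - Cau (fun t => (Real.sqrt (1 - t ^ 2) : ℂ) * g t) ((1 + ζ ^ 2) / (2 * ζ)) ∧
    H ζ = -((1 - ζ ^ 2) / (2 * ζ)) * Cau f ((1 + ζ ^ 2) / (2 * ζ)) := by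
  have hre : ∀ ζ : ℂ, ‖ζ‖ < 1 → ∀ j, 0 ≤ (Phi (fun x => (prt u j x : ℂ)) ζ).re := fun ζ hζ j =>
    Phi_re (prt_int hu j) (prt_nn u j) ζ hζ
  have hdne : ∀ n, ∀ ζ : ℂ, ‖ζ‖ ≤ 1 → (dl n : ℂ) + (1 - ζ ^ 2) ≠ 0 := fun n ζ hζ h => by
    have := (re_low (re_sq hζ) (dl_pos n).le).1
    rw [h, norm_zero] at this
    linarith [dl_pos n]
  have hpne : ∀ n (a : ℂ), 0 ≤ a.re → ((1:ℝ):ℂ) + (dl n : ℂ) * a ≠ 0 := fun n a ha h => by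
    have := (one_low ha n).1
    rw [h, norm_zero] at this
    linarith
  have hdl0 : Tendsto (fun n => (dl n : ℂ)) atTop (𝓝 0) := by
    have h1 : Tendsto dl atTop (𝓝 0) := tendsto_one_div_add_atTop_nhds_zero_nat
    have := (Complex.continuous_ofReal.tendsto 0).comp h1
    rw [Complex.ofReal_zero] at this; exact this
  have hlim : ∀ (q : ℂ) (Q : ℕ → ℂ), q ≠ 0 → Tendsto (fun n => q / ((dl n : ℂ) + q) *
    ∏ j ∈ Finset.range 4, (((1:ℝ):ℂ) + (dl n : ℂ) * Q j)⁻¹) atTop (𝓝 1) := by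
    intro q Q hq
    have t1 : Tendsto (fun n => q / ((dl n : ℂ) + q)) atTop (𝓝 (q / (0 + q))) :=
      tendsto_const_nhds.div (hdl0.add_const q) (by simpa using hq)
    have t2 : ∀ j ∈ Finset.range 4, Tendsto (fun n => (((1:ℝ):ℂ) + (dl n : ℂ) * Q j)⁻¹) atTop (𝓝 1) := by
      intro j _
      have := (tendsto_const_nhds (x := ((1:ℝ):ℂ))).add (hdl0.mul_const (Q j))
      have := this.inv₀ (by simp)
      simpa using this
    have := t1.mul (tendsto_finsetProd _ t2)
    simpa [hq] using this
  set M := Mu u with hM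
  have hone : ∀ ζ : ℂ, ‖ζ‖ < 1 → (1 - ζ ^ 2) ≠ 0 := fun ζ hζ h => by
    have : ζ ^ 2 = 1 := (sub_eq_zero.1 h).symm
    have h3 : ‖ζ ^ 2‖ = 1 := by rw [this, norm_one]
    rw [norm_pow] at h3
    nlinarith [norm_nonneg ζ]
  have hMd : ∀ n, DifferentiableOn ℂ (M n) (Metric.ball 0 1) := by
    intro n
    have d1 : DifferentiableOn ℂ (fun ζ : ℂ => (1 - ζ ^ 2) / ((dl n : ℂ) + (1 - ζ ^ 2))) (Metric.ball 0 1) := by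
      refine DifferentiableOn.fun_div (by fun_prop) (by fun_prop) fun ζ hζ => hdne n ζ ?_
      exact (mem_ball_zero_iff.1 hζ).le
    refine d1.fun_mul ?_
    refine DifferentiableOn.fun_finsetProd fun j _ => ?_
    refine DifferentiableOn.fun_inv ?_ fun ζ hζ => hpne n _ (hre ζ (mem_ball_zero_iff.1 hζ) j)
    exact ((Phi_diff (prt_int hu j)).const_mul _).const_add _
  have hM1 : ∀ n, ∀ ζ ∈ Metric.ball (0:ℂ) 1, ‖M n ζ‖ ≤ 1 := by
    intro n ζ hζ
    rw [mem_ball_zero_iff] at hζ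
    simp only [hM, Mu]
    rw [norm_mul, norm_div]
    refine mul_le_one₀ ?_ (norm_nonneg _) (P_bd (hre ζ hζ) n)
    exact div_le_one_of_le₀ (re_low (re_sq hζ.le) (dl_pos n).le).2 (norm_nonneg _)
  have hB : ∀ n, ∃ B, ∀ ζ ∈ Metric.ball (0:ℂ) 1, ‖H ζ * M n ζ‖ ≤ B := by
    intro n
    refine ⟨‖c‖ + 2 * (1 / dl n) * (4 * (1 / dl n)), fun ζ hζ => ?_⟩
    have hζ' := hζ
    rw [mem_ball_zero_iff] at hζ
    have e : H ζ * M n ζ = c * M n ζ + b ζ * (1 / ((dl n : ℂ) + (1 - ζ ^ 2))) *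
        (Phi u ζ * ∏ j ∈ Finset.range 4, (((1:ℝ):ℂ) + (dl n : ℂ) * Phi (fun x => (prt u j x : ℂ)) ζ)⁻¹) := by
      simp only [hM, Mu]
      linear_combination (1 / ((dl n : ℂ) + (1 - ζ ^ 2)) * ∏ j ∈ Finset.range 4, (((1:ℝ):ℂ) + (dl n : ℂ) * Phi (fun x => (prt u j x : ℂ)) ζ)⁻¹) * hHe ζ hζ
    rw [e]
    refine (norm_add_le _ _).trans (add_le_add ?_ ?_)
    · rw [norm_mul]; exact mul_le_of_le_one_right (norm_nonneg _) (hM1 n ζ hζ')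
    · rw [norm_mul, norm_mul (b ζ)]
      have hdp := dl_pos n
      refine mul_le_mul (mul_le_mul (hb ζ hζ) ?_ (norm_nonneg _) (by norm_num)) ?_ (norm_nonneg _) (by positivity)
      · rw [norm_div, norm_one]
        exact one_div_le_one_div_of_le hdp (re_low (re_sq hζ.le) hdp.le).1
      · rw [Phi_sum hu ζ hζ, Finset.sum_mul]
        refine (norm_sum_le _ _).trans ?_
        refine (Finset.sum_le_card_nsmul _ _ (1 / dl n) fun j hj => ?_).trans (le_of_eq ?_)
        · rw [mul_assoc, norm_mul, norm_pow, Complex.norm_I, one_pow, one_mul]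
          exact QP_bd (hre ζ hζ) n hj
        · simp
  have hbvj : ∀ᵐ θ ∂(volume.restrict (Ioo (-Real.pi) Real.pi)), ∀ j,
      Tendsto (fun r : ℝ => Phi (fun x => (prt u j x : ℂ)) (r * circleMap 0 1 θ)) (𝓝[<] 1)
        (𝓝 (hbv (fun x => (prt u j x : ℂ)) (FHT (fun x => (prt u j x : ℂ))) θ)) :=
    ae_all_iff.2 fun j => Phi_bv (prt_int hu j)
  set m : ℕ → ℝ → ℂ := fun n θ => (1 - (circleMap 0 1 θ) ^ 2) / ((dl n : ℂ) + (1 - (circleMap 0 1 θ) ^ 2)) *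
    ∏ j ∈ Finset.range 4, (((1:ℝ):ℂ) + (dl n : ℂ) * hbv (fun x => (prt u j x : ℂ)) (FHT (fun x => (prt u j x : ℂ))) θ)⁻¹ with hmdef
  have hm : ∀ n, ∀ᵐ θ ∂(volume.restrict (Ioo (-Real.pi) Real.pi)),
      Tendsto (fun r : ℝ => M n (r * circleMap 0 1 θ)) (𝓝[<] 1) (𝓝 (m n θ)) := by
    intro n
    filter_upwards [hbvj] with θ hθ
    have hc : Tendsto (fun r : ℝ => (r:ℂ) * circleMap 0 1 θ) (𝓝[<] 1) (𝓝 (circleMap 0 1 θ)) := by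
      have := ((by fun_prop : Continuous fun r : ℝ => (r:ℂ) * circleMap 0 1 θ).tendsto 1).mono_left (nhdsWithin_le_nhds (s := Iio 1))
      simpa using this
    have hq : Tendsto (fun r : ℝ => 1 - ((r:ℂ) * circleMap 0 1 θ)^2) (𝓝[<] 1) (𝓝 (1 - (circleMap 0 1 θ)^2)) :=
      tendsto_const_nhds.sub (hc.pow 2)
    simp only [hM, Mu, hmdef]
    refine Tendsto.mul (hq.div (tendsto_const_nhds.add hq) (hdne n _ ?_)) ?_
    · simp [norm_circleMap_zero]
    · refine tendsto_finsetProd _ fun j _ => ?_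
      refine Tendsto.inv₀ (tendsto_const_nhds.add ((hθ j).const_mul _)) (hpne n _ ?_)
      refine ge_of_tendsto ((Complex.continuous_re.tendsto _).comp (hθ j)) ?_
      filter_upwards [ev_Ioo] with r hr
      refine hre _ ?_ j
      rw [nrm_cm, abs_of_pos hr.1]; exact hr.2
  have hml : ∀ᵐ θ ∂(volume.restrict (Ioo (-Real.pi) Real.pi)), Tendsto (fun n => m n θ) atTop (𝓝 1) := by
    filter_upwards [ae_restrict_mem measurableSet_Ioo, Measure.ae_ne (volume.restrict _) (0:ℝ)] with θ hθ hne
    refine hlim _ _ fun h => ?_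
    have := Wp_eq (θ := θ) one_ne_zero
    unfold Wp at this
    rw [Complex.ofReal_one, one_mul, h, zero_div] at this
    have h2 := congrArg Complex.im this
    norm_num at h2
    rw [← Complex.ofReal_sin, Complex.ofReal_re] at h2
    exact hne ((Real.sin_eq_zero_iff_of_lt_of_lt hθ.1 hθ.2).1 h2)
  have hi := int_sym_on (hbv_int1 hf hg) (hbv_int2 hf hg)
  have hMl : ∀ ζ ∈ Metric.ball (0:ℂ) 1, Tendsto (fun n => M n ζ) atTop (𝓝 1) := fun ζ hζ =>
    hlim _ _ (hone ζ (mem_ball_zero_iff.1 hζ))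
  exact bv_repr hf hg
    (fun ζ hζ => smirnov hH hMd hM1 hB hMl hi hh hm hml hζ.ne (Or.inl ⟨hζ, rfl⟩))
    (fun ζ hζ => smirnov hH hMd hM1 hB hMl hi hh hm hml hζ.ne' (Or.inr ⟨hζ, rfl⟩)) ζ h0 h1


lemma wg_int {g : ℝ → ℂ} (hg : IntegrableOn g (Ioo (-1:ℝ) 1)) :
    IntegrableOn (fun t => (Real.sqrt (1 - t ^ 2) : ℂ) * g t) (Ioo (-1:ℝ) 1) := by
  refine Integrable.bdd_mul (c := 1) hg ?_ ?_
  · exact Continuous.aestronglyMeasurable (by fun_prop)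
  · refine Eventually.of_forall fun t => ?_
    rw [Complex.norm_real, Real.norm_of_nonneg (Real.sqrt_nonneg _)]
    exact Real.sqrt_le_one.2 (by nlinarith [sq_nonneg t])

lemma sqrt_cos {θ : ℝ} (hθ : θ ∈ Ioo 0 Real.pi) : Real.sqrt (1 - Real.cos θ ^ 2) = Real.sin θ := by
  rw [← Real.sin_sq, Real.sqrt_sq (Real.sin_pos_of_mem_Ioo hθ).le]

lemma fwd {f g : ℝ → ℂ} (hf : IntegrableOn f (Ioo (-1:ℝ) 1)) (hg : IntegrableOn g (Ioo (-1:ℝ) 1))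
    (h : ∀ᵐ t : ℝ, t ∈ Ioo (-1:ℝ) 1 → FHT f t = g t) :
    ∀ᵐ t : ℝ, t ∈ Ioo (-1:ℝ) 1 →
      FHT (fun t => (Real.sqrt (1 - t ^ 2) : ℂ) * g t) t = Phi f 0 - Real.sqrt (1 - t ^ 2) * f t := by
  have hbd : ∀ᵐ θ ∂(volume.restrict (Ioo (-Real.pi) Real.pi)),
      Tendsto (fun r : ℝ => Phi f (r * circleMap 0 1 θ)) (𝓝[<] 1) (𝓝 (hbv f g θ)) := by
    refine ae_sym ?_
    filter_upwards [ae_cos (ae_leb hf), exist_pv hf, ae_cos h] with θ h1 h2 h3 hθ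
    rw [hbv_pos hθ, hbv_neg hθ, ← h3 hθ]
    exact ⟨Phi_bv1 hf hθ (h1 hθ) (h2 hθ), Phi_bv2 hf hθ (h1 hθ) (h2 hθ)⟩
  have hm := mult hf hf hg (H := Phi f) (b := fun ζ => 1 - ζ ^ 2) (c := 0) (Phi_diff hf)
    (fun ζ _ => by ring) (fun ζ hζ => by
      have := norm_sub_le (1:ℂ) (ζ ^ 2)
      rw [norm_pow, norm_one] at this
      nlinarith [norm_nonneg ζ]) hbd
  have hw := wg_int hg
  refine ae_of_cos ?_
  filter_upwards [ae_cos (ae_leb hf), exist_pv hf, ae_cos h, ae_cos (ae_leb hw)] with θ h1 h2 h3 h4 hθ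
  have hb := Phi_bv1 hf hθ (h1 hθ) (h2 hθ)
  rw [h3 hθ] at hb
  have hc : Tendsto (fun r => Cau (fun t => (Real.sqrt (1 - t ^ 2) : ℂ) * g t) (zp θ r)) (𝓝[<] 1)
      (𝓝 (Phi f 0 - (Real.sin θ * f (Real.cos θ) + Complex.I * (Real.sin θ * g (Real.cos θ))))) := by
    refine Tendsto.congr' ?_ (hb.const_sub (Phi f 0))
    filter_upwards [ev_Ioo] with r hr
    have hr0 : (r:ℂ) ≠ 0 := by exact_mod_cast hr.1.ne'
    have := (hm (r * circleMap 0 1 θ) (mul_ne_zero hr0 (cm_ne θ))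
      (by rw [nrm_cm, abs_of_pos hr.1]; exact hr.2)).1
    unfold zp
    linear_combination -this
  have := FHT_eq (pv_of_cau hθ hw (h4 hθ) hc)
  rw [this, sqrt_cos hθ]
  ring

lemma one_sq_ne {ζ : ℂ} (h : ‖ζ‖ < 1) : 1 - ζ ^ 2 ≠ 0 := fun h0 => by
  have h1 : ζ ^ 2 = 1 := by linear_combination -h0
  have h2 : ‖ζ‖ ^ 2 = 1 := by rw [← norm_pow, h1, norm_one]
  nlinarith [norm_nonneg ζ]

lemma bwd {f g : ℝ → ℂ} (hf : IntegrableOn f (Ioo (-1:ℝ) 1)) (hg : IntegrableOn g (Ioo (-1:ℝ) 1))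
    {c : ℂ} (h : ∀ᵐ t : ℝ, t ∈ Ioo (-1:ℝ) 1 →
      Real.sqrt (1 - t ^ 2) * f t = c - FHT (fun t => (Real.sqrt (1 - t ^ 2) : ℂ) * g t) t) :
    ∀ᵐ t : ℝ, t ∈ Ioo (-1:ℝ) 1 → FHT f t = g t := by
  have hw := wg_int hg
  set u : ℝ → ℂ := fun t => (Real.sqrt (1 - t ^ 2) : ℂ) * g t with hu
  set H : ℂ → ℂ := fun ζ => c + Phi u ζ * (2 * ζ / (1 - ζ ^ 2)) with hHd
  have hH : DifferentiableOn ℂ H (Metric.ball 0 1) := by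
    refine (differentiableOn_const c).fun_add ((Phi_diff hw).fun_mul ?_)
    refine DifferentiableOn.fun_div (by fun_prop) (by fun_prop) fun ζ hζ => one_sq_ne (by simpa using hζ)
  have hW : ∀ θ : ℝ, Real.sin θ ≠ 0 → Tendsto (fun r : ℝ => 2 * ((r:ℂ) * circleMap 0 1 θ) /
      (1 - ((r:ℂ) * circleMap 0 1 θ) ^ 2)) (𝓝[<] 1) (𝓝 ((-(Real.sin θ) * Complex.I)⁻¹)) := by
    intro θ hs
    have hs' : (Real.sin θ : ℂ) ≠ 0 := by exact_mod_cast hs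
    refine ((Wp_tend θ).inv₀ (mul_ne_zero (neg_ne_zero.2 hs') Complex.I_ne_zero)).congr fun r => ?_
    rw [Wp, inv_div]
  have hp : ∀ᵐ θ : ℝ, θ ∈ Ioo 0 Real.pi →
      Tendsto (fun r : ℝ => H (r * circleMap 0 1 θ)) (𝓝[<] 1) (𝓝 (hbv f g θ)) ∧
      Tendsto (fun r : ℝ => H (r * circleMap 0 1 (-θ))) (𝓝[<] 1) (𝓝 (hbv f g (-θ))) := by
    filter_upwards [ae_cos (ae_leb hw), exist_pv hw, ae_cos h] with θ h1 h2 h3 hθ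
    have hs := (Real.sin_pos_of_mem_Ioo hθ).ne'
    have hs' : (Real.sin θ : ℂ) ≠ 0 := by exact_mod_cast hs
    have h3 := h3 hθ
    rw [sqrt_cos hθ] at h3
    have e : u (Real.cos θ) = Real.sin θ * g (Real.cos θ) := by rw [hu]; simp only [sqrt_cos hθ]
    constructor
    · have := ((Phi_bv1 hw hθ (h1 hθ) (h2 hθ)).mul (hW θ hs)).const_add c
      refine this.trans (le_of_eq ?_)
      congr 1
      rw [hbv_pos hθ, h3, e]
      field_simp
      linear_combination -(Real.sin θ : ℂ) * g (Real.cos θ) * Complex.I_sq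
    · have := ((Phi_bv2 hw hθ (h1 hθ) (h2 hθ)).mul (hW (-θ) (by simpa using hs))).const_add c
      refine this.trans (le_of_eq ?_)
      congr 1
      rw [hbv_neg hθ, h3, e, Real.sin_neg]
      push_cast
      rw [← Complex.ofReal_sin]
      field_simp
      linear_combination (Real.sin θ : ℂ) * g (Real.cos θ) * Complex.I_sq
  have hm := mult hw hf hg (H := H) (b := fun ζ => 2 * ζ) (c := c) hH
    (fun ζ hζ => by
      have := one_sq_ne hζ
      simp only [hHd]; field_simp) (fun ζ hζ => by
      rw [norm_mul, Complex.norm_ofNat]; linarith) (ae_sym hp)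
  refine ae_of_cos ?_
  filter_upwards [hp, ae_cos (ae_leb hf)] with θ h1 h2 hθ
  have hs := (Real.sin_pos_of_mem_Ioo hθ).ne'
  have hs' : (Real.sin θ : ℂ) ≠ 0 := by exact_mod_cast hs
  have hc : Tendsto (fun r => Cau f (zp θ r)) (𝓝[<] 1) (𝓝 (-(hbv f g θ * (-(Real.sin θ) * Complex.I)⁻¹))) := by
    refine Tendsto.congr' ?_ (((h1 hθ).1.mul (hW θ hs)).neg)
    filter_upwards [ev_Ioo] with r hr
    have hr0 : (r:ℂ) ≠ 0 := by exact_mod_cast hr.1.ne'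
    have h5 : ‖(r:ℂ) * circleMap 0 1 θ‖ < 1 := by rw [nrm_cm, abs_of_pos hr.1]; exact hr.2
    have h6 := mul_ne_zero hr0 (cm_ne θ)
    have h7 := one_sq_ne h5
    have := (hm _ h6 h5).2
    rw [this]
    unfold zp
    generalize (r:ℂ) * circleMap 0 1 θ = ζ at *
    field_simp
  rw [FHT_eq (pv_of_cau hθ hf (h2 hθ) hc), hbv_pos hθ]
  field_simp
  linear_combination f (Real.cos θ) * Complex.I_sq

lemma int1 {f : ℝ → ℂ} (h : MemLlogL f) : IntegrableOn f (Ioo (-1:ℝ) 1) := by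
  refine Integrable.mono' ((integrableOn_const (C := Real.exp 1) (by simp)).add h.2) h.1 (Eventually.of_forall fun x => ?_)
  simp only [Pi.add_apply]
  by_cases hx : ‖f x‖ ≤ Real.exp 1
  · have : 0 ≤ ‖f x‖ * max (Real.log ‖f x‖) 0 := by positivity
    linarith
  · push Not at hx
    have h1 : 1 ≤ Real.log ‖f x‖ := by
      rw [Real.le_log_iff_exp_le ((Real.exp_pos 1).trans hx)]; exact hx.le
    have := mul_le_mul_of_nonneg_left (h1.trans (le_max_left _ 0)) (norm_nonneg (f x))
    linarith [Real.exp_pos 1]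

lemma int2 {f : ℝ → ℂ} (h : MemLlogL2 f) : IntegrableOn f (Ioo (-1:ℝ) 1) := by
  refine Integrable.mono' (h.2.const_mul ((Real.log 2 ^ 2)⁻¹)) h.1 (Eventually.of_forall fun x => ?_)
  have h2 : 0 < Real.log 2 := Real.log_pos (by norm_num)
  have h1 : Real.log 2 ≤ Real.log (2 + ‖f x‖) := Real.log_le_log (by norm_num) (by simp)
  rw [inv_mul_eq_div, le_div_iff₀ (by positivity)]
  gcongr

lemma main_claim {f g : ℝ → ℂ} (hf : IntegrableOn f (Ioo (-1:ℝ) 1)) (hg : IntegrableOn g (Ioo (-1:ℝ) 1)) :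
    (FHT f =ᵐ[μI] g ↔
          ∃ c : ℂ, ∀ᵐ x : ℝ ∂μI,
            f x = hatT g x + c / (Real.sqrt (1 - x ^ 2) : ℂ)) := by
  have hne : ∀ x ∈ Ioo (-1:ℝ) 1, (Real.sqrt (1 - x ^ 2) : ℂ) ≠ 0 := fun x hx => by
    exact_mod_cast (Real.sqrt_pos.2 (by nlinarith [hx.1, hx.2])).ne'
  constructor
  · intro h
    have h' := fwd hf hg ((ae_restrict_iff' measurableSet_Ioo).1 h)
    refine ⟨Phi f 0, (ae_restrict_iff' measurableSet_Ioo).2 ?_⟩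
    filter_upwards [h'] with x hx hxm
    have := hne x hxm
    rw [hatT, hx hxm]
    field_simp
    ring
  · rintro ⟨c, h⟩
    refine (ae_restrict_iff' measurableSet_Ioo).2 (bwd (c := c) hf hg ?_)
    filter_upwards [(ae_restrict_iff' measurableSet_Ioo).1 h] with x hx hxm
    have := hne x hxm
    rw [hx hxm, hatT]
    field_simp
    ring

/-- Inversion of the airfoil equation: if `g` is in the range of `T : L log L → L¹`, then
`f ∈ L log L` solves `T(f) = g` a.e. iff `f(x) = T̂(g)(x) + c(1-x²)^{-1/2}` a.e. for some
constant `c ∈ ℂ`; in particular this holds for every `g ∈ L(log L)²`. -/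
theorem airfoil_inversion :
    (∀ g : ℝ → ℂ, IntegrableOn g (Set.Ioo (-1 : ℝ) 1) →
      (∃ h : ℝ → ℂ, MemLlogL h ∧ FHT h =ᵐ[μI] g) →
      ∀ f : ℝ → ℂ, MemLlogL f →
        (FHT f =ᵐ[μI] g ↔
          ∃ c : ℂ, ∀ᵐ x : ℝ ∂μI,
            f x = hatT g x + c / (Real.sqrt (1 - x ^ 2) : ℂ))) ∧
    (∀ g : ℝ → ℂ, MemLlogL2 g →
      ∀ f : ℝ → ℂ, MemLlogL f →
        (FHT f =ᵐ[μI] g ↔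
          ∃ c : ℂ, ∀ᵐ x : ℝ ∂μI,
            f x = hatT g x + c / (Real.sqrt (1 - x ^ 2) : ℂ))) := by
  exact ⟨fun g hg _ f hf => main_claim (int1 hf) hg, fun g hg f hf => main_claim (int1 hf) (int2 hg)⟩
end
end

section
/- The bounded linear operator T : LlogL(-1,1) → L^1(-1,1) given by the finite Hilbert transform is not a compact operator. -/
open MeasureTheory Set Filter

noncomputable section

def bmp (a d : ℝ) : ℝ → ℂ := fun x => (((Set.Ioo (0:ℝ) d).indicator (fun _ => a) x : ℝ) : ℂ)

lemma int_inv_sub {p q t : ℝ} (a : ℝ) (hpq : p ≤ q) (h : t < p ∨ q < t) :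
    ∫ x in p..q, a / (x - t) = a * Real.log ((q - t) / (p - t)) := by
  have h1 : ∫ x in p..q, a / (x - t) = ∫ x in (p - t)..(q - t), a / x :=
    intervalIntegral.integral_comp_sub_right (fun x => a / x) t
  rw [h1]
  simp_rw [div_eq_mul_inv a]
  rw [intervalIntegral.integral_const_mul, integral_inv]
  rw [Set.uIcc_of_le (by linarith)]
  rintro ⟨h2, h3⟩
  rcases h with h | h <;> linarith

lemma intble_inv_sub {p q t : ℝ} (a : ℝ) (hpq : p ≤ q) (h : t < p ∨ q < t) :
    IntervalIntegrable (fun x => a / (x - t)) volume p q := by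
  apply ContinuousOn.intervalIntegrable
  apply ContinuousOn.div continuousOn_const (by fun_prop)
  intro x hx
  rw [Set.uIcc_of_le hpq] at hx
  rcases h with h | h
  · have := hx.1; intro h0; linarith
  · have := hx.2; intro h0; linarith

lemma trunc_eq {a d t : ℝ} (hd0 : 0 < d) (hd1 : d < 1) (ht0 : t ≠ 0) (htd : t ≠ d) :
    ∀ᶠ ε in nhdsWithin (0:ℝ) (Set.Ioi 0),
      ∫ x in {x : ℝ | x ∈ Set.Ioo (-1 : ℝ) 1 ∧ ε ≤ |x - t|},
        (Set.Ioo (0:ℝ) d).indicator (fun _ => a) x / (x - t) = a * Real.log ((d - t) / t) := by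
  have key : ∀ ε : ℝ, ∫ x in {x : ℝ | x ∈ Set.Ioo (-1 : ℝ) 1 ∧ ε ≤ |x - t|},
        (Set.Ioo (0:ℝ) d).indicator (fun _ => a) x / (x - t)
        = ∫ x in {x : ℝ | x ∈ Set.Ioo (0 : ℝ) d ∧ ε ≤ |x - t|}, a / (x - t) := by
    intro ε
    have e1 : (fun x => (Set.Ioo (0:ℝ) d).indicator (fun _ => a) x / (x - t))
        = (Set.Ioo (0:ℝ) d).indicator (fun x => a / (x - t)) := by
      ext x; by_cases hx : x ∈ Set.Ioo (0:ℝ) d <;> simp [hx]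
    rw [e1, setIntegral_indicator measurableSet_Ioo]
    congr 2
    ext x
    simp only [Set.mem_inter_iff, Set.mem_ofPred_eq, Set.mem_Ioo]
    constructor
    · rintro ⟨⟨_, h⟩, h'⟩; exact ⟨h', h⟩
    · rintro ⟨⟨h1, h2⟩, h⟩; exact ⟨⟨⟨by linarith, by linarith⟩, h⟩, h1, h2⟩
  have hpos : ∀ r : ℝ, 0 < r → ∀ᶠ ε in nhdsWithin (0:ℝ) (Set.Ioi 0), ε ∈ Set.Ioo 0 r :=
    fun r hr => Ioo_mem_nhdsGT hr
  rcases lt_or_gt_of_ne ht0 with h | h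
  · filter_upwards [hpos (-t) (by linarith)] with ε hε
    rw [key]
    have : {x : ℝ | x ∈ Set.Ioo (0 : ℝ) d ∧ ε ≤ |x - t|} = Set.Ioo 0 d := by
      ext x
      simp only [Set.mem_ofPred_eq, and_iff_left_iff_imp]
      intro hx
      have := le_abs_self (x - t)
      have := hx.1; have := hε.2; linarith
    rw [this, ← integral_Ioc_eq_integral_Ioo, ← intervalIntegral.integral_of_le hd0.le,
      int_inv_sub a hd0.le (Or.inl h), zero_sub, div_neg, Real.log_neg_eq_log]
  rcases lt_or_gt_of_ne htd with h' | h'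
  · filter_upwards [hpos (min t (d - t)) (lt_min h (by linarith))] with ε hε
    rw [key]
    have h1 := lt_of_lt_of_le hε.2 (min_le_left _ _)
    have h2 := lt_of_lt_of_le hε.2 (min_le_right _ _)
    have h3 := hε.1
    have : {x : ℝ | x ∈ Set.Ioo (0 : ℝ) d ∧ ε ≤ |x - t|}
        = Set.Ioc 0 (t - ε) ∪ Set.Ico (t + ε) d := by
      ext x
      simp only [Set.mem_ofPred_eq, Set.mem_union, Set.mem_Ioo, Set.mem_Ioc, Set.mem_Ico, le_abs]
      constructor
      · rintro ⟨⟨_, _⟩, h | h⟩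
        · right; constructor <;> linarith
        · left; constructor <;> linarith
      · rintro (⟨_, _⟩ | ⟨_, _⟩)
        · exact ⟨⟨by linarith, by linarith⟩, Or.inr (by linarith)⟩
        · exact ⟨⟨by linarith, by linarith⟩, Or.inl (by linarith)⟩
    have i1 := intble_inv_sub (p := 0) (q := t - ε) (t := t) a (by linarith) (Or.inr (by linarith))
    have i2 := intble_inv_sub (p := t + ε) (q := d) (t := t) a (by linarith) (Or.inl (by linarith))
    rw [intervalIntegrable_iff_integrableOn_Ioc_of_le (by linarith)] at i1
    rw [intervalIntegrable_iff_integrableOn_Ico_of_le (by linarith)] at i2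
    rw [this, setIntegral_union _ measurableSet_Ico i1 i2,
      integral_Ico_eq_integral_Ioo, ← integral_Ioc_eq_integral_Ioo (x := t + ε),
      ← intervalIntegral.integral_of_le (by linarith),
      ← intervalIntegral.integral_of_le (by linarith),
      int_inv_sub a (by linarith) (Or.inr (by linarith)),
      int_inv_sub a (by linarith) (Or.inl (by linarith)), ← mul_add, ← Real.log_mul]
    · congr 2
      have : t ≠ 0 := ht0
      have : ε ≠ 0 := h3.ne'
      rw [show t - ε - t = -ε by ring, show t + ε - t = ε by ring, zero_sub]
      field_simp
    · rw [show t - ε - t = -ε by ring, zero_sub, neg_div_neg_eq]; positivity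
    · have : 0 < d - t := by linarith
      rw [show t + ε - t = ε by ring]; positivity
    · rw [Set.disjoint_left]
      intro x hx hx'
      have := hx.2; have := hx'.1; linarith
  · filter_upwards [hpos (t - d) (by linarith)] with ε hε
    rw [key]
    have : {x : ℝ | x ∈ Set.Ioo (0 : ℝ) d ∧ ε ≤ |x - t|} = Set.Ioo 0 d := by
      ext x
      simp only [Set.mem_ofPred_eq, and_iff_left_iff_imp]
      intro hx
      have := neg_le_abs (x - t)
      have := hx.2; have := hε.2; linarith
    rw [this, ← integral_Ioc_eq_integral_Ioo, ← intervalIntegral.integral_of_le hd0.le,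
      int_inv_sub a hd0.le (Or.inr h'), zero_sub, div_neg, Real.log_neg_eq_log]

def Fb (a d t : ℝ) : ℝ := Real.pi⁻¹ * (a * (Real.log (d - t) - Real.log t))

lemma FHT_bmp {a d t : ℝ} (hd0 : 0 < d) (hd1 : d < 1) (ht0 : t ≠ 0) (htd : t ≠ d) :
    FHT (bmp a d) t = ((Fb a d t : ℝ) : ℂ) := by
  unfold FHT
  apply Tendsto.limUnder_eq
  apply tendsto_const_nhds.congr'
  filter_upwards [trunc_eq (a := a) hd0 hd1 ht0 htd] with ε hε
  have : ∀ x : ℝ, bmp a d x / ((x:ℂ) - (t:ℂ))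
      = (((Set.Ioo (0:ℝ) d).indicator (fun _ => a) x / (x - t) : ℝ) : ℂ) := by
    intro x; simp [bmp]
  simp_rw [this]
  rw [integral_complex_ofReal, hε, Fb, Real.log_div (sub_ne_zero.2 htd.symm) ht0]
  push_cast
  rfl

lemma Fb_int (a d p q : ℝ) : IntervalIntegrable (Fb a d) volume p q := by
  unfold Fb
  apply IntervalIntegrable.const_mul
  apply IntervalIntegrable.const_mul
  apply IntervalIntegrable.sub
  · have := (intervalIntegral.intervalIntegrable_log' (a := d - p) (b := d - q)).comp_sub_left d
    simpa using this
  · exact intervalIntegral.intervalIntegrable_log'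

lemma bmp_norm {a : ℝ} (ha : 0 < a) (d x : ℝ) :
    ‖bmp a d x‖ = (Set.Ioo (0:ℝ) d).indicator (fun _ => a) x := by
  unfold bmp
  rw [Complex.norm_real, Real.norm_eq_abs, abs_of_nonneg]
  exact Set.indicator_nonneg (fun _ _ => ha.le) x

lemma bmp_mem {a d : ℝ} (ha : 0 < a) : MemLlogL (bmp a d) := by
  constructor
  · apply Measurable.aestronglyMeasurable
    unfold bmp
    exact Complex.measurable_ofReal.comp (measurable_const.indicator measurableSet_Ioo)
  · have : (fun x => ‖bmp a d x‖ * max (Real.log ‖bmp a d x‖) 0)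
        = (Set.Ioo (0:ℝ) d).indicator (fun _ => a * max (Real.log a) 0) := by
      ext x
      rw [bmp_norm ha]
      by_cases hx : x ∈ Set.Ioo (0:ℝ) d <;> simp [hx]
    rw [this]
    refine IntegrableOn.indicator ?_ measurableSet_Ioo
    exact integrableOn_const (by simp)

lemma bmp_dec {a d t : ℝ} (ha : 0 < a) (hd0 : 0 < d) (hd1 : d < 1) (ht : 0 < t) :
    decRearr (bmp a d) t = (Set.Ioo (0:ℝ) d).indicator (fun _ => a) t := by
  have h1 : ∀ l, 0 ≤ l → l < a → distFun (bmp a d) l = d := by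
    intro l hl hla
    unfold distFun
    have : {x : ℝ | x ∈ Set.Ioo (-1 : ℝ) 1 ∧ l < ‖bmp a d x‖} = Set.Ioo 0 d := by
      ext x
      simp only [Set.mem_ofPred_eq, bmp_norm ha]
      by_cases hx : x ∈ Set.Ioo (0:ℝ) d
      · simp only [hx, Set.indicator_of_mem, hla, and_true, iff_true]
        exact ⟨by linarith [hx.1], by linarith [hx.2]⟩
      · simp [hx, hl]
    rw [this, Real.volume_Ioo, ENNReal.toReal_ofReal (by linarith)]; ring
  have h2 : ∀ l, a ≤ l → distFun (bmp a d) l = 0 := by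
    intro l hla
    unfold distFun
    have : {x : ℝ | x ∈ Set.Ioo (-1 : ℝ) 1 ∧ l < ‖bmp a d x‖} = ∅ := by
      ext x
      simp only [Set.mem_ofPred_eq, bmp_norm ha]
      by_cases hx : x ∈ Set.Ioo (0:ℝ) d
      · simp [hx, hla]
      · simp [hx, ha.le.trans hla]
    rw [this]; simp
  unfold decRearr
  by_cases htd : t < d
  · have : {lam : ℝ | 0 ≤ lam ∧ distFun (bmp a d) lam ≤ t} = Set.Ici a := by
      ext l
      simp only [Set.mem_ofPred_eq, Set.mem_Ici]
      constructor
      · rintro ⟨hl, hl'⟩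
        by_contra! h
        rw [h1 l hl h] at hl'; linarith
      · intro h
        rw [h2 l h]; exact ⟨by linarith, ht.le⟩
    rw [this, csInf_Ici, Set.indicator_of_mem (show t ∈ Set.Ioo 0 d from ⟨ht, htd⟩)]
  · have : {lam : ℝ | 0 ≤ lam ∧ distFun (bmp a d) lam ≤ t} = Set.Ici 0 := by
      ext l
      simp only [Set.mem_ofPred_eq, Set.mem_Ici, and_iff_left_iff_imp]
      intro h
      rcases lt_or_ge l a with h' | h'
      · rw [h1 l h h']; linarith
      · rw [h2 l h']; exact ht.le
    rw [this, csInf_Ici, Set.indicator_of_notMem]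
    exact fun h => htd h.2

lemma bmp_llog {a d : ℝ} (ha : 0 < a) (hd0 : 0 < d) (hd1 : d < 1) :
    llogLNorm (bmp a d) = a * d * (Real.log 2 + 2 - Real.log d) := by
  unfold llogLNorm
  have : ∫ t in Set.Ioo (0 : ℝ) 2, decRearr (bmp a d) t * Real.log (2 * Real.exp 1 / t)
      = ∫ t in Set.Ioo (0 : ℝ) 2, (Set.Ioo (0:ℝ) d).indicator
        (fun t => a * (Real.log 2 + 1 - Real.log t)) t := by
    apply setIntegral_congr_fun measurableSet_Ioo
    intro t ht
    simp only [bmp_dec ha hd0 hd1 ht.1]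
    by_cases hx : t ∈ Set.Ioo (0:ℝ) d
    · simp only [hx, Set.indicator_of_mem]
      rw [Real.log_div (by positivity) ht.1.ne', Real.log_mul (by norm_num) (by positivity),
        Real.log_exp]
    · simp [hx]
  rw [this, setIntegral_indicator measurableSet_Ioo,
    Set.inter_eq_right.2 (Set.Ioo_subset_Ioo_right (by linarith)),
    ← integral_Ioc_eq_integral_Ioo, ← intervalIntegral.integral_of_le hd0.le,
    intervalIntegral.integral_const_mul, intervalIntegral.integral_sub (by simp)
      intervalIntegral.intervalIntegrable_log', integral_log]
  simp
  ring

lemma Fb_lower {a d s : ℝ} (ha : 0 < a) (hd0 : 0 < d) (hds : d < s) :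
    a * d * Real.log (s / d) / Real.pi ≤ ∫ t in d..s, |Fb a d t| := by
  have : ∫ t in d..s, (a * d / Real.pi) * t⁻¹ = a * d * Real.log (s / d) / Real.pi := by
    rw [intervalIntegral.integral_const_mul, integral_inv]
    · ring
    · rw [Set.uIcc_of_le hds.le]; intro h; linarith [h.1]
  rw [← this]
  apply intervalIntegral.integral_mono_on_of_le_Ioo hds.le
  · apply IntervalIntegrable.const_mul
    apply ContinuousOn.intervalIntegrable
    apply ContinuousOn.inv₀ continuousOn_id
    intro x hx
    rw [Set.uIcc_of_le hds.le] at hx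
    exact (hd0.trans_le hx.1).ne'
  · exact (Fb_int a d d s).abs
  · intro t ht
    have ht0 : 0 < t := hd0.trans ht.1
    have h1 : 0 < t - d := sub_pos.2 ht.1
    have h2 : d * t⁻¹ ≤ Real.log t - Real.log (d - t) := by
      have := Real.log_le_sub_one_of_pos (show 0 < (t - d) / t by positivity)
      rw [Real.log_div h1.ne' ht0.ne', show (t - d) / t - 1 = - (d * t⁻¹) by field_simp; ring] at this
      rw [← Real.log_neg_eq_log (d - t), neg_sub]; linarith
    refine le_trans ?_ (neg_le_abs _)
    unfold Fb
    have h3 : 0 ≤ Real.pi⁻¹ * a := by positivity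
    calc a * d / Real.pi * t⁻¹ = Real.pi⁻¹ * a * (d * t⁻¹) := by ring
      _ ≤ Real.pi⁻¹ * a * (Real.log t - Real.log (d - t)) := mul_le_mul_of_nonneg_left h2 h3
      _ = _ := by ring

lemma diff_lower {a d a' d' s : ℝ} (ha : 0 < a) (hd0 : 0 < d) (hds : d < s) (hs : s < 1)
    (hd0' : 0 < d') (hd1' : d' < 1) :
    a * d * Real.log (s / d) / Real.pi - ∫ t in (0:ℝ)..s, |Fb a' d' t|
      ≤ ∫ x in Set.Ioo (-1 : ℝ) 1, ‖FHT (bmp a' d') x - FHT (bmp a d) x‖ := by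
  have e : ∫ x in Set.Ioo (-1 : ℝ) 1, ‖FHT (bmp a' d') x - FHT (bmp a d) x‖
      = ∫ x in (-1:ℝ)..1, |Fb a' d' x - Fb a d x| := by
    rw [intervalIntegral.integral_of_le (by norm_num), integral_Ioc_eq_integral_Ioo]
    apply integral_congr_ae
    apply ae_restrict_of_ae
    filter_upwards [Measure.ae_ne volume (0:ℝ), Measure.ae_ne volume d, Measure.ae_ne volume d']
      with x h0 h1 h2
    rw [FHT_bmp hd0 (by linarith) h0 h1, FHT_bmp hd0' hd1' h0 h2, ← Complex.ofReal_sub,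
      Complex.norm_real, Real.norm_eq_abs]
  rw [e]
  have hD : ∀ p q, IntervalIntegrable (fun x => |Fb a' d' x - Fb a d x|) volume p q :=
    fun p q => ((Fb_int _ _ _ _).sub (Fb_int _ _ _ _)).abs
  calc _ ≤ (∫ t in d..s, |Fb a d t|) - ∫ t in d..s, |Fb a' d' t| := by
        have := Fb_lower ha hd0 hds
        have h2 : ∫ t in d..s, |Fb a' d' t| ≤ ∫ t in (0:ℝ)..s, |Fb a' d' t| :=
          intervalIntegral.integral_mono_interval hd0.le hds.le le_rfl
            (ae_of_all _ fun x => abs_nonneg _) (Fb_int _ _ _ _).abs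
        linarith
    _ = ∫ t in d..s, (|Fb a d t| - |Fb a' d' t|) :=
        (intervalIntegral.integral_sub (Fb_int _ _ _ _).abs (Fb_int _ _ _ _).abs).symm
    _ ≤ ∫ t in d..s, |Fb a' d' t - Fb a d t| := by
        apply intervalIntegral.integral_mono_on hds.le
          ((Fb_int _ _ _ _).abs.sub (Fb_int _ _ _ _).abs) (hD _ _)
        intro x _
        rw [abs_sub_comm]
        exact abs_sub_abs_le_abs_sub _ _
    _ ≤ _ := intervalIntegral.integral_mono_interval (by linarith) hds.le hs.le
            (ae_of_all _ fun x => abs_nonneg _) (hD _ _)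

def sqq (n : ℕ) : ℝ := Real.exp (-((n:ℝ) + 2))
def dq (n : ℕ) : ℝ := Real.exp (-(2 * ((n:ℝ) + 2)))
def aq (n : ℕ) : ℝ := 1 / (4 * ((n:ℝ) + 2) * dq n)

/-- `T : L log L(-1,1) → L¹(-1,1)` is not compact: it is not the case that every sequence
in the unit ball of `L log L` has a subsequence whose image under `T` is Cauchy in `L¹`. -/
theorem FHT_not_compact :
    ¬ ∀ f : ℕ → ℝ → ℂ,
        (∀ n, MemLlogL (f n)) → (∀ n, llogLNorm (f n) ≤ 1) →
        ∃ φ : ℕ → ℕ, StrictMono φ ∧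
          ∀ ε : ℝ, 0 < ε → ∃ N : ℕ, ∀ m ≥ N, ∀ n ≥ N,
            ∫ x in Set.Ioo (-1 : ℝ) 1, ‖FHT (f (φ m)) x - FHT (f (φ n)) x‖ < ε := by
  intro H
  have hd0 : ∀ n, 0 < dq n := fun n => Real.exp_pos _
  have hd1 : ∀ n, dq n < 1 := fun n => Real.exp_lt_one_iff.2 (by have : (0:ℝ) ≤ n := n.cast_nonneg; linarith)
  have hs1 : ∀ n, sqq n < 1 := fun n => Real.exp_lt_one_iff.2 (by have : (0:ℝ) ≤ n := n.cast_nonneg; linarith)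
  have hds : ∀ n, dq n < sqq n := fun n => Real.exp_lt_exp.2 (by have : (0:ℝ) ≤ n := n.cast_nonneg; linarith)
  have ha : ∀ n, 0 < aq n := fun n => by
    have := hd0 n
    unfold aq; positivity
  have had : ∀ n, aq n * dq n = 1 / (4 * ((n:ℝ) + 2)) := fun n => by
    have := (hd0 n).ne'
    unfold aq; field_simp
  obtain ⟨φ, hφ, hC⟩ := H (fun n => bmp (aq n) (dq n)) (fun n => bmp_mem (ha n)) (fun n => by
    rw [bmp_llog (ha n) (hd0 n) (hd1 n), had, dq, Real.log_exp]
    have h0 : (0:ℝ) ≤ n := n.cast_nonneg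
    have := Real.log_two_lt_d9
    rw [one_div_mul_eq_div, div_le_one (by positivity)]
    linarith)
  obtain ⟨N, hN⟩ := hC (1 / (8 * Real.pi)) (by positivity)
  have hst : Tendsto sqq atTop (nhds 0) := by
    unfold sqq
    apply Real.tendsto_exp_neg_atTop_nhds_zero.comp
    exact tendsto_atTop_add_const_right _ _ tendsto_natCast_atTop_atTop
  have hcont : Continuous fun s => ∫ t in (0:ℝ)..s, |Fb (aq (φ N)) (dq (φ N)) t| :=
    intervalIntegral.continuous_primitive (fun p q => (Fb_int _ _ p q).abs) 0
  have hlim := (hcont.tendsto 0).comp (hst.comp hφ.tendsto_atTop)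
  simp only [intervalIntegral.integral_same] at hlim
  have hev := hlim.eventually (gt_mem_nhds (show (0:ℝ) < 1 / (8 * Real.pi) by positivity))
  obtain ⟨n, hn1, hn2⟩ := (hev.and (eventually_ge_atTop N)).exists
  have h1 := hN N le_rfl n hn2
  have h2 := diff_lower (ha (φ n)) (hd0 (φ n)) (hds (φ n)) (hs1 (φ n)) (hd0 (φ N)) (hd1 (φ N))
    (a' := aq (φ N))
  have h3 : aq (φ n) * dq (φ n) * Real.log (sqq (φ n) / dq (φ n)) / Real.pi = 1 / (4 * Real.pi) := by
    rw [had, sqq, dq, ← Real.exp_sub, Real.log_exp]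
    have h0 : (0:ℝ) ≤ (φ n : ℝ) := (φ n).cast_nonneg
    have : ((φ n : ℝ) + 2) ≠ 0 := by positivity
    have := Real.pi_ne_zero
    rw [show -((φ n : ℝ) + 2) - -(2 * ((φ n : ℝ) + 2)) = (φ n : ℝ) + 2 by ring]
    field_simp
  rw [h3] at h2
  simp only [Function.comp] at hn1
  have h4 : 1 / (4 * Real.pi) = 1 / (8 * Real.pi) + 1 / (8 * Real.pi) := by
    have := Real.pi_ne_zero
    field_simp; norm_num
  linarith
end
end
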